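/- Under hypothesis (H2) and Δ∈(0,+∞), the following hold: (i) for every ρ∈(0,+∞), the function q↦I_{P_out}(q,ρ) is twice continuously differentiable, concave, and nonincreasing on [0,ρ]; (ii) for every ρ∈(0,+∞), q↦I_{P_out}(q,ρ) is Lipschitz on [0,ρ] with Lipschitz constant C_1(a,b) := (4a²+1)b², where a := ‖φ/√Δ‖_∞ and b := ‖∂_xφ/√Δ‖_∞; (iii) for every q∈[0,+∞), ρ↦I_{P_out}(q,ρ) is Lipschitz on [q,+∞) with Lipschitz constant C_2(a,b,c) := b²(128a⁴+12a²+27)+c(16a³+4√(2/π)), where c := ‖∂_{xx}φ/√Δ‖_∞. -/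

import Mathlib

open MeasureTheory ProbabilityTheory Real

noncomputable section

namespace GLM

/-- Standard Gaussian measure on ℝ. -/
def stdG : Measure ℝ := gaussianReal 0 1

/-- The transition density P_out(y|x). -/
def Pout (Δ : ℝ) {kA : ℕ} (PA : Measure (Fin kA → ℝ)) (φ : ℝ → (Fin kA → ℝ) → ℝ)
    (y x : ℝ) : ℝ :=
  (Real.sqrt (2 * π * Δ))⁻¹ * ∫ a, Real.exp (-(y - φ x a) ^ 2 / (2 * Δ)) ∂PA

/-- Scalar channel mutual information I_{P_out}(q, ρ'). -/
def IPout (Δ : ℝ) {kA : ℕ} (PA : Measure (Fin kA → ℝ)) (φ : ℝ → (Fin kA → ℝ) → ℝ)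
    (q ρ' : ℝ) : ℝ :=
  (∫ v, ∫ a, ∫ z,
      Real.log (Pout Δ PA φ (φ (Real.sqrt ρ' * v) a + Real.sqrt Δ * z) (Real.sqrt ρ' * v))
      ∂stdG ∂PA ∂stdG)
  - ∫ v, ∫ w, ∫ a, ∫ z,
      Real.log (∫ w', Pout Δ PA φ
        (φ (Real.sqrt q * v + Real.sqrt (ρ' - q) * w) a + Real.sqrt Δ * z)
        (Real.sqrt q * v + Real.sqrt (ρ' - q) * w') ∂stdG) ∂stdG ∂PA ∂stdG ∂stdG

/-- Sup-norm of a function of (x, a). -/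
def supNorm {kA : ℕ} (f : ℝ → (Fin kA → ℝ) → ℝ) : ℝ :=
  sSup (Set.range fun p : ℝ × (Fin kA → ℝ) => |f p.1 p.2|)

section Heat

open Set Filter Topology

instance : IsProbabilityMeasure stdG := by unfold stdG; infer_instance

/-- The heat semigroup `(G_t F)(x) = E F(x + √t W)`, `W` a standard Gaussian. -/
def heat (t : ℝ) (F : ℝ → ℝ) (x : ℝ) : ℝ := ∫ w, F (x + √t * w) ∂stdG

lemma integrable_of_measurable_of_abs_le {α : Type*} [MeasurableSpace α] {μ : Measure α}
    {F G : α → ℝ} (hG : Integrable G μ) (hF : Measurable F) (h : ∀ x, |F x| ≤ G x) :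
    Integrable F μ :=
  hG.mono' hF.aestronglyMeasurable (Eventually.of_forall h)

lemma integrable_of_bounded {α : Type*} [MeasurableSpace α] {μ : Measure α} [IsFiniteMeasure μ]
    {F : α → ℝ} {C : ℝ} (hF : Measurable F) (h : ∀ x, |F x| ≤ C) : Integrable F μ :=
  integrable_of_measurable_of_abs_le (integrable_const C) hF h

lemma map_add_stdG {s t : ℝ} (hs : 0 ≤ s) (ht : 0 ≤ t) :
    (stdG.prod stdG).map (fun z : ℝ × ℝ => √s * z.1 + √t * z.2)
      = stdG.map (fun v => √(s + t) * v) := by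
  have h1 : (stdG.prod stdG).map (fun z : ℝ × ℝ => √s * z.1 + √t * z.2)
      = (stdG.map (fun v => √s * v)) ∗ (stdG.map (fun v => √t * v)) := by
    rw [Measure.conv, Measure.map_prod_map _ _ (by fun_prop) (by fun_prop),
      Measure.map_map (by fun_prop) (by fun_prop)]
    rfl
  rw [h1]
  unfold stdG
  rw [gaussianReal_map_const_mul, gaussianReal_map_const_mul, gaussianReal_map_const_mul,
    gaussianReal_conv_gaussianReal]
  congr 1
  · ring
  · ext
    simp [Real.sq_sqrt, hs, ht, add_nonneg hs ht]

lemma integral_gauss_add {s t C : ℝ} (hs : 0 ≤ s) (ht : 0 ≤ t) {F : ℝ → ℝ} (hF : Measurable F)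
    (hb : ∀ x, |F x| ≤ C) :
    ∫ v, ∫ w, F (√s * v + √t * w) ∂stdG ∂stdG = ∫ v, F (√(s + t) * v) ∂stdG := by
  have h := congrArg (fun m => ∫ x, F x ∂m) (map_add_stdG hs ht)
  rw [integral_map (by fun_prop) hF.aestronglyMeasurable,
    integral_map (by fun_prop) hF.aestronglyMeasurable, integral_prod] at h
  · exact h
  · exact integrable_of_bounded (by fun_prop) (fun x => hb _)

lemma heat_heat {s t C : ℝ} (hs : 0 ≤ s) (ht : 0 ≤ t) {F : ℝ → ℝ} (hF : Measurable F)
    (hb : ∀ x, |F x| ≤ C) (x : ℝ) :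
    ∫ w, heat t F (x + √s * w) ∂stdG = heat (s + t) F x := by
  have := integral_gauss_add hs ht (F := fun z => F (x + z)) (by fun_prop) (fun z => hb _)
  simpa only [heat, add_assoc] using this

lemma integral_heat {s t C : ℝ} (hs : 0 ≤ s) (ht : 0 ≤ t) {F : ℝ → ℝ} (hF : Measurable F)
    (hb : ∀ x, |F x| ≤ C) :
    ∫ v, heat t F (√s * v) ∂stdG = ∫ v, F (√(s + t) * v) ∂stdG :=
  integral_gauss_add hs ht hF hb

lemma integrable_heat_integrand {C : ℝ} {F : ℝ → ℝ} (hF : Measurable F) (hb : ∀ x, |F x| ≤ C)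
    (t x : ℝ) : Integrable (fun w => F (x + √t * w)) stdG :=
  integrable_of_bounded (by fun_prop) fun _ => hb _

lemma heat_mono {C C' : ℝ} {F G : ℝ → ℝ} (hF : Measurable F) (hb : ∀ x, |F x| ≤ C)
    (hG : Measurable G) (hb' : ∀ x, |G x| ≤ C') (h : ∀ x, F x ≤ G x) (t x : ℝ) :
    heat t F x ≤ heat t G x :=
  integral_mono (integrable_heat_integrand hF hb t x) (integrable_heat_integrand hG hb' t x)
    fun _ => h _

lemma heat_const (t C x : ℝ) : heat t (fun _ => C) x = C := by simp [heat]

lemma heat_le {C C' : ℝ} {F : ℝ → ℝ} (hF : Measurable F) (hb : ∀ x, |F x| ≤ C)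
    (h : ∀ x, F x ≤ C') (t x : ℝ) : heat t F x ≤ C' :=
  (heat_mono hF hb measurable_const (fun _ => le_rfl) h t x).trans (heat_const t C' x).le

lemma le_heat {C C' : ℝ} {F : ℝ → ℝ} (hF : Measurable F) (hb : ∀ x, |F x| ≤ C)
    (h : ∀ x, C' ≤ F x) (t x : ℝ) : C' ≤ heat t F x :=
  (heat_const t C' x).ge.trans (heat_mono measurable_const (fun _ => le_rfl) hF hb h t x)

lemma abs_heat_le {C : ℝ} {F : ℝ → ℝ} (hF : Measurable F) (hb : ∀ x, |F x| ≤ C) (t x : ℝ) :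
    |heat t F x| ≤ C :=
  abs_le.2 ⟨le_heat hF hb (fun x => (abs_le.1 (hb x)).1) t x,
    heat_le hF hb (fun x => (abs_le.1 (hb x)).2) t x⟩

lemma measurable_heat {Y : Type*} [MeasurableSpace Y] {p : Y → ℝ → ℝ}
    (hp : Measurable fun z : Y × ℝ => p z.1 z.2) (t : ℝ) :
    Measurable fun z : Y × ℝ => heat t (p z.1) z.2 := by
  have : StronglyMeasurable fun z : (Y × ℝ) × ℝ => p z.1.1 (z.1.2 + √t * z.2) :=
    (hp.comp (by fun_prop : Measurable fun z : (Y × ℝ) × ℝ =>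
      (z.1.1, z.1.2 + √t * z.2))).stronglyMeasurable
  exact (this.integral_prod_right').measurable

lemma integrable_id_stdG : Integrable (fun w : ℝ => w) stdG :=
  (memLp_id_gaussianReal (μ := 0) (v := 1) 1).integrable le_rfl

lemma integrable_pow_stdG (n : ℕ) : Integrable (fun w : ℝ => w ^ n) stdG := by
  have := (memLp_id_gaussianReal (μ := 0) (v := 1) n).integrable_norm_pow'
  refine this.mono' (by fun_prop) (Eventually.of_forall fun w => ?_)
  simp

lemma integrable_abs_pow_stdG (n : ℕ) : Integrable (fun w : ℝ => |w| ^ n) stdG := by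
  simpa using (integrable_pow_stdG n).norm

lemma integrable_abs_stdG : Integrable (fun w : ℝ => |w|) stdG := integrable_id_stdG.abs

lemma integral_id_stdG : ∫ w, w ∂stdG = 0 := integral_id_gaussianReal

lemma integral_sq_stdG : ∫ w, w ^ 2 ∂stdG = 1 := by
  unfold stdG
  have h := variance_fun_id_gaussianReal (μ := 0) (v := 1)
  rw [variance_eq_integral (by fun_prop)] at h
  simpa [integral_id_gaussianReal] using h

lemma integral_abs_stdG_le : ∫ w, |w| ∂stdG ≤ 1 := by
  have : ∫ w, |w| ∂stdG ≤ ∫ w, (1 + w ^ 2) / 2 ∂stdG := by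
    refine integral_mono integrable_abs_stdG
      (((integrable_const _).add (integrable_pow_stdG 2)).div_const 2) fun w => ?_
    have := sq_nonneg (|w| - 1)
    simp only
    nlinarith [sq_abs w]
  rw [integral_div, integral_add (integrable_const _) (integrable_pow_stdG 2),
    integral_sq_stdG] at this
  simpa using this

lemma integral_pow_four_stdG : ∫ w, w ^ 4 ∂stdG = 3 := by
  have h := congrArg (fun m => ∫ x, x ^ 4 ∂m)
    (map_add_stdG (s := 1 / 2) (t := 1 / 2) (by norm_num) (by norm_num))
  rw [integral_map (by fun_prop) (by fun_prop), integral_map (by fun_prop) (by fun_prop)] at h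
  have h2 : √(1 / 2 : ℝ) ^ 2 = 1 / 2 := Real.sq_sqrt (by norm_num)
  have h4 : √(1 / 2 : ℝ) ^ 4 = 1 / 4 := by
    rw [show 4 = 2 * 2 from rfl, pow_mul, h2]; norm_num
  have e : ∀ z : ℝ × ℝ, (√(1 / 2) * z.1 + √(1 / 2) * z.2) ^ 4
      = 1 / 4 * (z.1 ^ 4 * z.2 ^ 0) + z.1 ^ 3 * z.2 ^ 1 + 3 / 2 * (z.1 ^ 2 * z.2 ^ 2)
        + z.1 ^ 1 * z.2 ^ 3 + 1 / 4 * (z.1 ^ 0 * z.2 ^ 4) := by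
    intro z
    rw [← mul_add, mul_pow, h4]; ring
  have I : ∀ m n : ℕ, Integrable (fun z : ℝ × ℝ => z.1 ^ m * z.2 ^ n) (stdG.prod stdG) :=
    fun m n => (integrable_pow_stdG m).mul_prod (integrable_pow_stdG n)
  simp only [e] at h
  rw [integral_add, integral_add, integral_add, integral_add, integral_const_mul,
    integral_const_mul, integral_const_mul] at h
  · have P : ∀ m n : ℕ, ∫ z : ℝ × ℝ, z.1 ^ m * z.2 ^ n ∂(stdG.prod stdG)
        = (∫ v, v ^ m ∂stdG) * ∫ w, w ^ n ∂stdG :=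
      fun m n => integral_prod_mul (fun v : ℝ => v ^ m) (fun w : ℝ => w ^ n)
    rw [P, P, P, P, P] at h
    simp only [integral_sq_stdG, pow_one, integral_id_stdG, pow_zero] at h
    norm_num at h
    linarith
  all_goals
    first
      | exact I _ _
      | exact (I _ _).const_mul _
      | skip
  · exact ((I _ _).const_mul _).add (I _ _)
  · exact (((I _ _).const_mul _).add (I _ _)).add ((I _ _).const_mul _)
  · exact ((((I _ _).const_mul _).add (I _ _)).add ((I _ _).const_mul _)).add (I _ _)

lemma integral_abs_pow_three_stdG_le : ∫ w, |w| ^ 3 ∂stdG ≤ 2 := by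
  have : ∫ w, |w| ^ 3 ∂stdG ≤ ∫ w, (w ^ 2 + w ^ 4) / 2 ∂stdG := by
    refine integral_mono (integrable_abs_pow_stdG 3)
      (((integrable_pow_stdG 2).add (integrable_pow_stdG 4)).div_const 2) fun w => ?_
    have h1 := mul_nonneg (sq_nonneg |w|) (sq_nonneg (|w| - 1))
    have h2 : w ^ 4 = |w| ^ 4 := by rw [← abs_pow, abs_of_nonneg (by positivity)]
    simp only
    rw [h2, ← sq_abs w]
    nlinarith
  rw [integral_div, integral_add (integrable_pow_stdG 2) (integrable_pow_stdG 4),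
    integral_sq_stdG, integral_pow_four_stdG] at this
  linarith

lemma abs_sub_le_of_hasDerivAt {F F' : ℝ → ℝ} {C : ℝ} (hd : ∀ x, HasDerivAt F (F' x) x)
    (hC : ∀ x, |F' x| ≤ C) (x y : ℝ) : |F x - F y| ≤ C * |x - y| := by
  have h : ‖F x - F y‖ ≤ C * ‖x - y‖ :=
    Convex.norm_image_sub_le_of_norm_hasDerivWithin_le (𝕜 := ℝ) (f := F) (f' := F')
      (s := univ) (fun z _ => (hd z).hasDerivWithinAt) (fun z _ => hC z) convex_univ
      (mem_univ y) (mem_univ x)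
  exact h

lemma sqrt_sub_sqrt_le {ε t : ℝ} (hε : 0 ≤ ε) (h : ε ≤ t) : |√(t - ε) - √t| ≤ √ε := by
  have h1 : √t ≤ √(t - ε) + √ε := by
    rw [Real.sqrt_le_left (by positivity)]
    nlinarith [Real.sq_sqrt (sub_nonneg.2 h), Real.sq_sqrt hε, Real.sqrt_nonneg ε,
      Real.sqrt_nonneg (t - ε), mul_nonneg (Real.sqrt_nonneg ε) (Real.sqrt_nonneg (t - ε))]
  have h2 : √(t - ε) ≤ √t := Real.sqrt_le_sqrt (by linarith)
  rw [abs_le]; constructor <;> linarith [Real.sqrt_nonneg ε]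

lemma abs_heat_sub_heat_le {F F' : ℝ → ℝ} {C₀ C ε t : ℝ} (hd : ∀ x, HasDerivAt F (F' x) x)
    (hb : ∀ x, |F x| ≤ C₀) (hC : ∀ x, |F' x| ≤ C) (hε : 0 ≤ ε) (h : ε ≤ t) (x w : ℝ) :
    |heat (t - ε) F (x + √ε * w) - heat t F x| ≤ C * √ε * (|w| + 1) := by
  have hF : Measurable F :=
    (continuous_iff_continuousAt.2 fun x => (hd x).continuousAt).measurable
  have hC0 : 0 ≤ C := (abs_nonneg _).trans (hC 0)
  rw [heat, heat, ← integral_sub (integrable_heat_integrand hF hb _ _)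
    (integrable_heat_integrand hF hb _ _)]
  have hint : Integrable (fun w' : ℝ => C * √ε * (|w| + |w'|)) stdG :=
    ((integrable_const _).add integrable_abs_stdG).const_mul _
  calc _ ≤ ∫ w', C * √ε * (|w| + |w'|) ∂stdG := by
        rw [← Real.norm_eq_abs]
        refine norm_integral_le_of_norm_le hint (Eventually.of_forall fun w' => ?_)
        refine (abs_sub_le_of_hasDerivAt hd hC _ _).trans ?_
        rw [mul_assoc]
        refine mul_le_mul_of_nonneg_left ?_ hC0
        have e : x + √ε * w + √(t - ε) * w' - (x + √t * w')
          = √ε * w + (√(t - ε) - √t) * w' := by ring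
        rw [e]
        refine (abs_add_le _ _).trans ?_
        rw [abs_mul, abs_mul, abs_of_nonneg (Real.sqrt_nonneg ε), mul_add]
        gcongr
        exact sqrt_sub_sqrt_le hε h
    _ = C * √ε * (|w| + ∫ w', |w'| ∂stdG) := by
        rw [integral_const_mul, integral_add (integrable_const _) integrable_abs_stdG]
        simp
    _ ≤ _ := by gcongr; exact integral_abs_stdG_le

lemma hasDerivAt_heat_sq {F F' : ℝ → ℝ} {C₀ C t : ℝ} (hd : ∀ x, HasDerivAt F (F' x) x)
    (hF' : Measurable F') (hb : ∀ x, |F x| ≤ C₀) (hC : ∀ x, |F' x| ≤ C) (ht : 0 < t) (x w : ℝ) :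
    HasDerivAt (fun s => heat (t - s ^ 2) F (x + s * w)) (w * heat t F' x) 0 := by
  have hF : Measurable F :=
    (continuous_iff_continuousAt.2 fun x => (hd x).continuousAt).measurable
  have hC0 : 0 ≤ C := (abs_nonneg _).trans (hC 0)
  have hst : 0 < √t := Real.sqrt_pos.2 ht
  set S : Set ℝ := Ioo (-(√t / 2)) (√t / 2)
  have hS : S ∈ 𝓝 (0 : ℝ) := Ioo_mem_nhds (by linarith) (by linarith)
  have key : ∀ s ∈ S, √t / 2 ≤ √(t - s ^ 2) ∧ 0 < t - s ^ 2 := by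
    intro s hs
    have h1 : s ^ 2 ≤ (√t / 2) ^ 2 := by
      rw [sq_le_sq, abs_of_pos (by positivity : 0 < √t / 2)]
      exact (abs_lt.2 hs).le
    have h2 := Real.sq_sqrt ht.le
    refine ⟨Real.le_sqrt_of_sq_le (by nlinarith), by nlinarith⟩
  have := (hasDerivAt_integral_of_dominated_loc_of_deriv_le (μ := stdG) (x₀ := (0 : ℝ))
    (F := fun s w' => F (x + s * w + √(t - s ^ 2) * w'))
    (F' := fun s w' => F' (x + s * w + √(t - s ^ 2) * w')
      * (w + (-(2 * s) / (2 * √(t - s ^ 2))) * w'))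
    (bound := fun w' => C * (|w| + |w'|)) hS
    (Eventually.of_forall fun s => (hF.comp (by fun_prop)).aestronglyMeasurable)
    (integrable_of_bounded (by fun_prop) fun _ => hb _)
    (by fun_prop)
    (Eventually.of_forall fun w' s hs => ?_)
    (((integrable_const _).add integrable_abs_stdG).const_mul _)
    (Eventually.of_forall fun w' s hs => ?_)).2
  · refine this.congr_deriv ?_
    simp only [heat]
    rw [← integral_const_mul]
    refine integral_congr_ae (Eventually.of_forall fun w' => ?_)
    simp [mul_comm]
  · rw [norm_mul, Real.norm_eq_abs, Real.norm_eq_abs]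
    refine mul_le_mul (hC _) ?_ (abs_nonneg _) hC0
    refine (abs_add_le _ _).trans (add_le_add le_rfl ?_)
    rw [abs_mul]
    refine mul_le_of_le_one_left (abs_nonneg _) ?_
    obtain ⟨h1, h2⟩ := key s hs
    have h3 : 0 < √(t - s ^ 2) := Real.sqrt_pos.2 h2
    rw [abs_div, abs_neg, abs_mul, abs_mul, abs_of_pos h3, div_le_one (by positivity)]
    have := (abs_lt.2 hs).le
    rw [abs_two]
    linarith
  · obtain ⟨h1, h2⟩ := key s hs
    have e1 : HasDerivAt (fun s : ℝ => t - s ^ 2) (-(2 * s)) s := by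
      simpa using (hasDerivAt_pow 2 s).const_sub t
    have e2 : HasDerivAt (fun s : ℝ => x + s * w + √(t - s ^ 2) * w')
        (w + (-(2 * s) / (2 * √(t - s ^ 2))) * w') s := by
      have := (((hasDerivAt_id s).mul_const w).const_add x).add
        ((e1.sqrt h2.ne').mul_const w')
      simp only [one_mul] at this
      exact this
    exact (hd _).comp s e2

end Heat

section DensityFamily

open Set Filter Topology

/-- A family of positive functions `p y`, twice differentiable with derivatives `p1 y` and `p2 y`,
all controlled by a weight `D` whose powers are integrable. -/
structure DensityFamily {Y : Type*} [MeasurableSpace Y] (μ : Measure Y) (p p1 p2 : Y → ℝ → ℝ)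
    (D : Y → ℝ) : Prop where
  measD : Measurable D
  one_le : ∀ y, 1 ≤ D y
  int_pow : ∀ n : ℕ, Integrable (fun y => D y ^ n) μ
  meas : Measurable fun z : Y × ℝ => p z.1 z.2
  meas1 : Measurable fun z : Y × ℝ => p1 z.1 z.2
  meas2 : Measurable fun z : Y × ℝ => p2 z.1 z.2
  inv_le : ∀ y x, (D y)⁻¹ ≤ p y x
  le : ∀ y x, p y x ≤ D y
  abs1_le : ∀ y x, |p1 y x| ≤ D y
  abs2_le : ∀ y x, |p2 y x| ≤ D y
  deriv1 : ∀ y x, HasDerivAt (p y) (p1 y x) x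
  deriv2 : ∀ y x, HasDerivAt (p1 y) (p2 y x) x

/-- The remainder of the first order expansion of `κ` at `(M₁, N₁)`. -/
def remainder (κ κM κN : ℝ → ℝ → ℝ) (M₁ N₁ M₂ N₂ : ℝ) : ℝ :=
  κ M₂ N₂ - κ M₁ N₁ - κM M₁ N₁ * (M₂ - M₁) - κN M₁ N₁ * (N₂ - N₁)

/-- A function `κ` on the right half-plane with partial derivatives `κM`, `κN`, whose second order
part is the quadratic form `Q`, with polynomial control. -/
structure Integrand (κ κM κN : ℝ → ℝ → ℝ) (Q : ℝ → ℝ → ℝ → ℝ → ℝ) : Prop where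
  meas : Measurable fun z : ℝ × ℝ => κ z.1 z.2
  measM : Measurable fun z : ℝ × ℝ => κM z.1 z.2
  measN : Measurable fun z : ℝ × ℝ => κN z.1 z.2
  bound : ∀ D M N : ℝ, 1 ≤ D → D⁻¹ ≤ M → M ≤ D → |N| ≤ D → |κ M N| ≤ 4 * D ^ 8
  boundM : ∀ D M N : ℝ, 1 ≤ D → D⁻¹ ≤ M → M ≤ D → |N| ≤ D → |κM M N| ≤ 4 * D ^ 8
  boundN : ∀ D M N : ℝ, 1 ≤ D → D⁻¹ ≤ M → M ≤ D → |N| ≤ D → |κN M N| ≤ 4 * D ^ 8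
  rem_le : ∀ D M₁ N₁ M₂ N₂ : ℝ, 1 ≤ D → D⁻¹ ≤ M₁ → M₁ ≤ D → |N₁| ≤ D → D⁻¹ ≤ M₂ → M₂ ≤ D →
    |N₂| ≤ D → |remainder κ κM κN M₁ N₁ M₂ N₂| ≤ 4 * D ^ 8 * ((M₂ - M₁) ^ 2 + (N₂ - N₁) ^ 2)
  tendsto_rem : ∀ (f g : ℝ → ℝ) (m n : ℝ), 0 < f 0 → HasDerivAt f m 0 → HasDerivAt g n 0 →
    Tendsto (fun s => remainder κ κM κN (f 0) (g 0) (f s) (g s) / s ^ 2) (𝓝[>] 0)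
      (𝓝 (Q (f 0) (g 0) m n))
  homog : ∀ M N c m n : ℝ, Q M N (c * m) (c * n) = c ^ 2 * Q M N m n

variable {Y : Type*} [MeasurableSpace Y] {μ : Measure Y}
  {p p1 p2 : Y → ℝ → ℝ} {D : Y → ℝ} {κ κM κN : ℝ → ℝ → ℝ} {Q : ℝ → ℝ → ℝ → ℝ → ℝ}

namespace DensityFamily

lemma pos (h : DensityFamily μ p p1 p2 D) (y : Y) : 0 < D y := one_pos.trans_le (h.one_le y)

lemma p_pos (h : DensityFamily μ p p1 p2 D) (y : Y) (x : ℝ) : 0 < p y x :=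
  (inv_pos.2 (h.pos y)).trans_le (h.inv_le y x)

lemma abs_le (h : DensityFamily μ p p1 p2 D) (y : Y) (x : ℝ) : |p y x| ≤ D y := by
  rw [abs_of_pos (h.p_pos y x)]; exact h.le y x

lemma meas_right (h : DensityFamily μ p p1 p2 D) (y : Y) : Measurable (p y) :=
  h.meas.comp measurable_prodMk_left

lemma meas1_right (h : DensityFamily μ p p1 p2 D) (y : Y) : Measurable (p1 y) :=
  h.meas1.comp measurable_prodMk_left

lemma meas2_right (h : DensityFamily μ p p1 p2 D) (y : Y) : Measurable (p2 y) :=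
  h.meas2.comp measurable_prodMk_left

lemma inv_le_heat (h : DensityFamily μ p p1 p2 D) (t : ℝ) (y : Y) (x : ℝ) :
    (D y)⁻¹ ≤ heat t (p y) x := le_heat (h.meas_right y) (h.abs_le y) (h.inv_le y) t x

lemma heat_le (h : DensityFamily μ p p1 p2 D) (t : ℝ) (y : Y) (x : ℝ) :
    heat t (p y) x ≤ D y := GLM.heat_le (h.meas_right y) (h.abs_le y) (h.le y) t x

lemma heat_pos (h : DensityFamily μ p p1 p2 D) (t : ℝ) (y : Y) (x : ℝ) :
    0 < heat t (p y) x := (inv_pos.2 (h.pos y)).trans_le (h.inv_le_heat t y x)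

lemma abs_heat1_le (h : DensityFamily μ p p1 p2 D) (t : ℝ) (y : Y) (x : ℝ) :
    |heat t (p1 y) x| ≤ D y := abs_heat_le (h.meas1_right y) (h.abs1_le y) t x

lemma abs_heat2_le (h : DensityFamily μ p p1 p2 D) (t : ℝ) (y : Y) (x : ℝ) :
    |heat t (p2 y) x| ≤ D y := abs_heat_le (h.meas2_right y) (h.abs2_le y) t x

end DensityFamily

/-- `∫ κ(G_t p, G_t p1) dμ` at the point `x`. -/
def density (μ : Measure Y) (p p1 : Y → ℝ → ℝ) (κ : ℝ → ℝ → ℝ) (t x : ℝ) : ℝ :=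
  ∫ y, κ (heat t (p y) x) (heat t (p1 y) x) ∂μ

/-- The average of `density` at time `t` over a centred Gaussian of variance `q`. -/
def energy (μ : Measure Y) (p p1 : Y → ℝ → ℝ) (κ : ℝ → ℝ → ℝ) (q t : ℝ) : ℝ :=
  ∫ v, density μ p p1 κ t (√q * v) ∂stdG

/-- The second order remainder along a Brownian increment of variance `ε`. -/
def increment (p p1 : Y → ℝ → ℝ) (κ κM κN : ℝ → ℝ → ℝ) (t ε x : ℝ) (z : Y × ℝ) : ℝ :=
  remainder κ κM κN (heat t (p z.1) x) (heat t (p1 z.1) x)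
    (heat (t - ε) (p z.1) (x + √ε * z.2)) (heat (t - ε) (p1 z.1) (x + √ε * z.2))

lemma measurable_heat_shift (hp : Measurable fun z : Y × ℝ => p z.1 z.2) (t x c : ℝ) :
    Measurable fun z : Y × ℝ => heat t (p z.1) (x + c * z.2) :=
  (measurable_heat hp t).comp (by fun_prop : Measurable fun z : Y × ℝ => (z.1, x + c * z.2))

lemma measurable_heat_fst (hp : Measurable fun z : Y × ℝ => p z.1 z.2) (t x : ℝ) :
    Measurable fun z : Y × ℝ => heat t (p z.1) x :=
  (measurable_heat hp t).comp (by fun_prop : Measurable fun z : Y × ℝ => (z.1, x))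

lemma measurable_increment (h : DensityFamily μ p p1 p2 D) (hκ : Integrand κ κM κN Q)
    (t ε x : ℝ) : Measurable (increment p p1 κ κM κN t ε x) := by
  have m1 := measurable_heat_fst h.meas t x
  have n1 := measurable_heat_fst h.meas1 t x
  have m2 := measurable_heat_shift h.meas (t - ε) x (√ε)
  have n2 := measurable_heat_shift h.meas1 (t - ε) x (√ε)
  exact (((hκ.meas.comp (m2.prodMk n2)).sub (hκ.meas.comp (m1.prodMk n1))).sub
    ((hκ.measM.comp (m1.prodMk n1)).mul (m2.sub m1))).sub
    ((hκ.measN.comp (m1.prodMk n1)).mul (n2.sub n1))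

lemma integrable_increment_bound (h : DensityFamily μ p p1 p2 D) :
    Integrable (fun z : Y × ℝ => 8 * D z.1 ^ 10 * (|z.2| + 1) ^ 2) (μ.prod stdG) := by
  refine Integrable.mul_prod ((h.int_pow 10).const_mul 8) (g := fun w : ℝ => (|w| + 1) ^ 2) ?_
  refine (((integrable_abs_pow_stdG 2).add (integrable_abs_stdG.const_mul 2)).add
    (integrable_const 1)).congr (Eventually.of_forall fun w => ?_)
  simp only [Pi.add_apply]; ring

lemma abs_density_le (h : DensityFamily μ p p1 p2 D) (hκ : Integrand κ κM κN Q) (t x : ℝ) :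
    |density μ p p1 κ t x| ≤ ∫ y, 4 * D y ^ 8 ∂μ := by
  rw [← Real.norm_eq_abs]
  exact norm_integral_le_of_norm_le ((h.int_pow 8).const_mul 4) (Eventually.of_forall fun y =>
    hκ.bound _ _ _ (h.one_le y) (h.inv_le_heat t y x) (h.heat_le t y x) (h.abs_heat1_le t y x))

lemma abs_increment_le (h : DensityFamily μ p p1 p2 D) (hκ : Integrand κ κM κN Q) {t ε : ℝ}
    (hε : 0 ≤ ε) (hεt : ε ≤ t) (x : ℝ) (z : Y × ℝ) :
    |increment p p1 κ κM κN t ε x z| ≤ ε * (8 * D z.1 ^ 10 * (|z.2| + 1) ^ 2) := by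
  refine (hκ.rem_le (D z.1) _ _ _ _ (h.one_le _) (h.inv_le_heat ..) (h.heat_le ..)
    (h.abs_heat1_le ..) (h.inv_le_heat ..) (h.heat_le ..) (h.abs_heat1_le ..)).trans ?_
  have hM := abs_heat_sub_heat_le (h.deriv1 z.1) (h.abs_le z.1) (h.abs1_le z.1) hε hεt x z.2
  have hN := abs_heat_sub_heat_le (h.deriv2 z.1) (h.abs1_le z.1) (h.abs2_le z.1) hε hεt x z.2
  have hr : 0 ≤ D z.1 * √ε * (|z.2| + 1) := by have := h.pos z.1; positivity
  have hM2 := sq_le_sq' (by linarith [abs_le.1 hM]) (abs_le.1 hM).2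
  have hN2 := sq_le_sq' (by linarith [abs_le.1 hN]) (abs_le.1 hN).2
  have e : (D z.1 * √ε * (|z.2| + 1)) ^ 2 = D z.1 ^ 2 * ε * (|z.2| + 1) ^ 2 := by
    rw [mul_pow, mul_pow, Real.sq_sqrt hε]
  rw [e] at hM2 hN2
  have hD : 0 ≤ 4 * D z.1 ^ 8 := by have := h.pos z.1; positivity
  calc _ ≤ 4 * D z.1 ^ 8 * (D z.1 ^ 2 * ε * (|z.2| + 1) ^ 2 + D z.1 ^ 2 * ε * (|z.2| + 1) ^ 2) :=
        mul_le_mul_of_nonneg_left (add_le_add hM2 hN2) hD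
    _ = _ := by ring

/-- A Lipschitz constant for `q ↦ energy q (ρ - q)`. -/
def energyLip (μ : Measure Y) (D : Y → ℝ) : ℝ :=
  ∫ z : Y × ℝ, 8 * D z.1 ^ 10 * (|z.2| + 1) ^ 2 ∂(μ.prod stdG)

lemma abs_integral_increment_le (h : DensityFamily μ p p1 p2 D) (hκ : Integrand κ κM κN Q)
    {t ε : ℝ} (hε : 0 ≤ ε) (hεt : ε ≤ t) (x : ℝ) :
    |∫ z, increment p p1 κ κM κN t ε x z ∂(μ.prod stdG)| ≤ ε * energyLip μ D := by
  rw [← Real.norm_eq_abs, energyLip, ← integral_const_mul]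
  exact norm_integral_le_of_norm_le ((integrable_increment_bound h).const_mul ε)
    (Eventually.of_forall fun z => abs_increment_le h hκ hε hεt x z)

variable [IsProbabilityMeasure μ]

lemma measurable_density (h : DensityFamily μ p p1 p2 D) (hκ : Integrand κ κM κN Q) (t : ℝ) :
    Measurable (density μ p p1 κ t) := by
  have : StronglyMeasurable fun z : Y × ℝ => κ (heat t (p z.1) z.2) (heat t (p1 z.1) z.2) :=
    (hκ.meas.comp ((measurable_heat h.meas t).prodMk
      (measurable_heat h.meas1 t))).stronglyMeasurable
  exact this.integral_prod_left'.measurable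

lemma energy_eq (h : DensityFamily μ p p1 p2 D) (hκ : Integrand κ κM κN Q) {q ε : ℝ} (hq : 0 ≤ q)
    (hε : 0 ≤ ε) (t : ℝ) :
    energy μ p p1 κ (q + ε) t = ∫ v, ∫ w, density μ p p1 κ t (√q * v + √ε * w) ∂stdG ∂stdG :=
  (integral_gauss_add hq hε (measurable_density h hκ t) (abs_density_le h hκ t)).symm

lemma integral_mul_martingale_increment {F : Y → ℝ → ℝ} {K E : Y → ℝ} {ε t : ℝ}
    (hF : Measurable fun z : Y × ℝ => F z.1 z.2) (hFE : ∀ y x, |F y x| ≤ E y)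
    (hK : Measurable K) (hKE : Integrable (fun y => |K y| * E y) μ)
    (hε : 0 ≤ ε) (hεt : ε ≤ t) (x : ℝ) :
    Integrable (fun z : Y × ℝ => K z.1 * (heat (t - ε) (F z.1) (x + √ε * z.2) - heat t (F z.1) x))
      (μ.prod stdG) ∧
    ∫ z : Y × ℝ, K z.1 * (heat (t - ε) (F z.1) (x + √ε * z.2) - heat t (F z.1) x)
      ∂(μ.prod stdG) = 0 := by
  have hm : ∀ y, Measurable (F y) := fun y => hF.comp measurable_prodMk_left
  have hint : Integrable (fun z : Y × ℝ => K z.1 *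
      (heat (t - ε) (F z.1) (x + √ε * z.2) - heat t (F z.1) x)) (μ.prod stdG) := by
    refine integrable_of_measurable_of_abs_le ((hKE.const_mul 2).comp_fst stdG)
      ((hK.comp measurable_fst).mul ((measurable_heat_shift hF _ _ _).sub
        (measurable_heat_fst hF _ _))) fun z => ?_
    have h1 := abs_heat_le (hm z.1) (hFE z.1) (t - ε) (x + √ε * z.2)
    have h2 := abs_heat_le (hm z.1) (hFE z.1) t x
    rw [abs_mul]
    nlinarith [abs_sub (heat (t - ε) (F z.1) (x + √ε * z.2)) (heat t (F z.1) x),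
      abs_nonneg (K z.1)]
  refine ⟨hint, ?_⟩
  rw [integral_prod _ hint]
  refine integral_eq_zero_of_ae (Eventually.of_forall fun y => ?_)
  simp only [Pi.zero_apply]
  rw [integral_const_mul, integral_sub _ (integrable_const _),
    heat_heat hε (sub_nonneg.2 hεt) (hm y) (hFE y)]
  · simp
  · exact integrable_of_bounded ((measurable_heat_shift hF (t - ε) x (√ε)).comp
      measurable_prodMk_left) fun w => abs_heat_le (hm y) (hFE y) _ _

lemma integral_density_sub (h : DensityFamily μ p p1 p2 D) (hκ : Integrand κ κM κN Q) {t ε : ℝ}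
    (hε : 0 ≤ ε) (hεt : ε ≤ t) (x : ℝ) :
    ∫ w, density μ p p1 κ (t - ε) (x + √ε * w) ∂stdG - density μ p p1 κ t x
      = ∫ z, increment p p1 κ κM κN t ε x z ∂(μ.prod stdG) := by
  have m1 := measurable_heat_fst h.meas t x
  have n1 := measurable_heat_fst h.meas1 t x
  have m2 := measurable_heat_shift h.meas (t - ε) x (√ε)
  have n2 := measurable_heat_shift h.meas1 (t - ε) x (√ε)
  have hb : ∀ s x' y, |κ (heat s (p y) x') (heat s (p1 y) x')| ≤ 4 * D y ^ 8 := fun s x' y =>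
    hκ.bound _ _ _ (h.one_le y) (h.inv_le_heat s y x') (h.heat_le s y x') (h.abs_heat1_le s y x')
  have hint : Integrable (fun z : Y × ℝ => 4 * D z.1 ^ 8) (μ.prod stdG) :=
    ((h.int_pow 8).const_mul 4).comp_fst stdG
  have i2 : Integrable (fun z : Y × ℝ => κ (heat (t - ε) (p z.1) (x + √ε * z.2))
      (heat (t - ε) (p1 z.1) (x + √ε * z.2))) (μ.prod stdG) :=
    integrable_of_measurable_of_abs_le hint (hκ.meas.comp (m2.prodMk n2)) fun z => hb _ _ _
  have i1 : Integrable (fun z : Y × ℝ => κ (heat t (p z.1) x) (heat t (p1 z.1) x))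
      (μ.prod stdG) :=
    integrable_of_measurable_of_abs_le hint (hκ.meas.comp (m1.prodMk n1)) fun z => hb _ _ _
  have hs : Measurable fun y : Y => (y, (0 : ℝ)) := by fun_prop
  have hweight : Integrable (fun y => 4 * D y ^ 8 * D y) μ := by
    refine ((h.int_pow 9).const_mul 4).congr (Eventually.of_forall fun y => ?_)
    simp only; ring
  have iK : ∀ K : Y → ℝ, Measurable K → (∀ y, |K y| ≤ 4 * D y ^ 8) →
      Integrable (fun y => |K y| * D y) μ := fun K hK hKb =>
    integrable_of_measurable_of_abs_le hweight (hK.norm.mul h.measD) fun y => by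
      rw [abs_mul, abs_abs, abs_of_pos (h.pos y)]
      exact mul_le_mul_of_nonneg_right (hKb y) (h.pos y).le
  have mKM : Measurable fun y => κM (heat t (p y) x) (heat t (p1 y) x) :=
    (hκ.measM.comp (m1.prodMk n1)).comp hs
  have mKN : Measurable fun y => κN (heat t (p y) x) (heat t (p1 y) x) :=
    (hκ.measN.comp (m1.prodMk n1)).comp hs
  obtain ⟨iM, zM⟩ := integral_mul_martingale_increment (μ := μ) h.meas h.abs_le mKM
    (iK _ mKM fun y => hκ.boundM _ _ _ (h.one_le y) (h.inv_le_heat t y x) (h.heat_le t y x)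
      (h.abs_heat1_le t y x)) hε hεt x
  obtain ⟨iN, zN⟩ := integral_mul_martingale_increment (μ := μ) h.meas1 h.abs1_le mKN
    (iK _ mKN fun y => hκ.boundN _ _ _ (h.one_le y) (h.inv_le_heat t y x) (h.heat_le t y x)
      (h.abs_heat1_le t y x)) hε hεt x
  unfold increment remainder
  rw [integral_sub (by exact (i2.sub i1).sub iM) iN, integral_sub (by exact i2.sub i1) iM,
    integral_sub i2 i1, zM, zN, sub_zero, sub_zero, integral_prod_symm _ i2, integral_prod _ i1]
  simp [density]

lemma measurable_integral_increment (h : DensityFamily μ p p1 p2 D) (hκ : Integrand κ κM κN Q)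
    {t ε : ℝ} (hε : 0 ≤ ε) (hεt : ε ≤ t) :
    Measurable fun x => ∫ z, increment p p1 κ κM κN t ε x z ∂(μ.prod stdG) := by
  simp_rw [← integral_density_sub h hκ hε hεt]
  refine Measurable.sub ?_ (measurable_density h hκ t)
  have : StronglyMeasurable fun z : ℝ × ℝ => density μ p p1 κ (t - ε) (z.1 + √ε * z.2) :=
    ((measurable_density h hκ (t - ε)).comp (by fun_prop)).stronglyMeasurable
  exact this.integral_prod_right'.measurable

lemma energy_sub (h : DensityFamily μ p p1 p2 D) (hκ : Integrand κ κM κN Q) {q t ε : ℝ}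
    (hq : 0 ≤ q) (hε : 0 ≤ ε) (hεt : ε ≤ t) :
    energy μ p p1 κ (q + ε) (t - ε) - energy μ p p1 κ q t
      = ∫ v, ∫ z, increment p p1 κ κM κN t ε (√q * v) z ∂(μ.prod stdG) ∂stdG := by
  simp_rw [← integral_density_sub h hκ hε hεt]
  rw [integral_sub, energy_eq h hκ hq hε, energy]
  · have : StronglyMeasurable fun z : ℝ × ℝ => density μ p p1 κ (t - ε) (√q * z.1 + √ε * z.2) :=
      ((measurable_density h hκ (t - ε)).comp (by fun_prop)).stronglyMeasurable
    refine integrable_of_bounded this.integral_prod_right'.measurable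
      (C := ∫ y, 4 * D y ^ 8 ∂μ) fun v => ?_
    rw [← Real.norm_eq_abs]
    refine (norm_integral_le_of_norm_le (integrable_const _) (Eventually.of_forall fun w =>
      abs_density_le h hκ _ _)).trans ?_
    simp
  · exact integrable_of_bounded ((measurable_density h hκ t).comp (by fun_prop)) fun v =>
      abs_density_le h hκ _ _

lemma abs_energy_sub_le (h : DensityFamily μ p p1 p2 D) (hκ : Integrand κ κM κN Q) {q t ε : ℝ}
    (hq : 0 ≤ q) (hε : 0 ≤ ε) (hεt : ε ≤ t) :
    |energy μ p p1 κ (q + ε) (t - ε) - energy μ p p1 κ q t| ≤ ε * energyLip μ D := by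
  rw [energy_sub h hκ hq hε hεt, ← Real.norm_eq_abs]
  refine (norm_integral_le_of_norm_le (integrable_const _) (Eventually.of_forall fun v =>
    abs_integral_increment_le h hκ hε hεt _)).trans ?_
  simp

lemma continuousOn_energy (h : DensityFamily μ p p1 p2 D) (hκ : Integrand κ κM κN Q) (ρ : ℝ) :
    ContinuousOn (fun q => energy μ p p1 κ q (ρ - q)) (Icc 0 ρ) := by
  have hle : ∀ a ∈ Icc 0 ρ, ∀ b ∈ Icc 0 ρ, a ≤ b →
      |energy μ p p1 κ b (ρ - b) - energy μ p p1 κ a (ρ - a)| ≤ (b - a) * energyLip μ D := by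
    intro a ha b hb hab
    have := abs_energy_sub_le h hκ (q := a) (t := ρ - a) (ε := b - a) ha.1 (by linarith)
      (by linarith [hb.2])
    rwa [show a + (b - a) = b by ring, show ρ - a - (b - a) = ρ - b by ring] at this
  have hC : 0 ≤ energyLip μ D := integral_nonneg fun z => by
    have := h.pos z.1
    positivity
  refine LipschitzOnWith.continuousOn (K := Real.toNNReal (energyLip μ D))
    (LipschitzOnWith.of_dist_le_mul fun a ha b hb => ?_)
  rw [Real.dist_eq, Real.dist_eq, Real.coe_toNNReal _ hC]
  rcases le_total a b with hab | hab
  · rw [abs_sub_comm, abs_sub_comm a b, abs_of_nonneg (sub_nonneg.2 hab), mul_comm]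
    exact hle a ha b hb hab
  · rw [abs_of_nonneg (sub_nonneg.2 hab), mul_comm]
    exact hle b hb a ha hab

lemma tendsto_integral_increment (h : DensityFamily μ p p1 p2 D) (hκ : Integrand κ κM κN Q)
    {t : ℝ} (ht : 0 < t) (x : ℝ) :
    Tendsto (fun ε => (∫ z, increment p p1 κ κM κN t ε x z ∂(μ.prod stdG)) / ε) (𝓝[>] 0)
      (𝓝 (∫ y, Q (heat t (p y) x) (heat t (p1 y) x) (heat t (p1 y) x) (heat t (p2 y) x) ∂μ)) := by
  have hsqrt : Tendsto Real.sqrt (𝓝[>] 0) (𝓝[>] 0) := by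
    refine tendsto_nhdsWithin_iff.2 ⟨?_, ?_⟩
    · simpa using (Real.continuous_sqrt.tendsto 0).mono_left nhdsWithin_le_nhds
    · filter_upwards [self_mem_nhdsWithin] with ε hε using Real.sqrt_pos.2 hε
  have hlim : ∀ z : Y × ℝ, Tendsto (fun ε => increment p p1 κ κM κN t ε x z / ε) (𝓝[>] 0)
      (𝓝 (Q (heat t (p z.1) x) (heat t (p1 z.1) x) (heat t (p1 z.1) x) (heat t (p2 z.1) x)
        * z.2 ^ 2)) := by
    intro z
    have d1 := hasDerivAt_heat_sq (h.deriv1 z.1) (h.meas1_right z.1) (h.abs_le z.1)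
      (h.abs1_le z.1) ht x z.2
    have d2 := hasDerivAt_heat_sq (h.deriv2 z.1) (h.meas2_right z.1) (h.abs1_le z.1)
      (h.abs2_le z.1) ht x z.2
    have := (hκ.tendsto_rem _ _ _ _ (by exact h.heat_pos _ _ _) d1 d2).comp hsqrt
    rw [hκ.homog, mul_comm (z.2 ^ 2)] at this
    simp only [ne_eq, OfNat.ofNat_ne_zero, not_false_eq_true, zero_pow, sub_zero, zero_mul,
      add_zero] at this
    refine this.congr' ?_
    filter_upwards [self_mem_nhdsWithin] with ε hε
    have hε' : 0 ≤ ε := le_of_lt hε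
    simp only [Function.comp, increment, Real.sq_sqrt hε']
  have e : ∫ y, Q (heat t (p y) x) (heat t (p1 y) x) (heat t (p1 y) x) (heat t (p2 y) x) ∂μ
      = ∫ z : Y × ℝ, Q (heat t (p z.1) x) (heat t (p1 z.1) x) (heat t (p1 z.1) x)
        (heat t (p2 z.1) x) * z.2 ^ 2 ∂(μ.prod stdG) := by
    rw [integral_prod_mul (fun y => Q (heat t (p y) x) (heat t (p1 y) x) (heat t (p1 y) x)
      (heat t (p2 y) x)) (fun w : ℝ => w ^ 2), integral_sq_stdG, mul_one]
  rw [e]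
  simp_rw [← integral_div]
  refine tendsto_integral_filter_of_dominated_convergence _ ?_ ?_ (integrable_increment_bound h)
    (Eventually.of_forall hlim)
  · exact Eventually.of_forall fun ε =>
      ((measurable_increment h hκ t ε x).div_const ε).aestronglyMeasurable
  · filter_upwards [Ioo_mem_nhdsGT ht] with ε hε
    refine Eventually.of_forall fun z => ?_
    rw [Real.norm_eq_abs, abs_div, abs_of_pos hε.1, div_le_iff₀ hε.1, mul_comm _ ε]
    exact abs_increment_le h hκ hε.1.le hε.2.le x z

lemma hasDerivWithinAt_energy (h : DensityFamily μ p p1 p2 D) (hκ : Integrand κ κM κN Q)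
    {q ρ : ℝ} (hq : 0 ≤ q) (hqρ : q < ρ) :
    HasDerivWithinAt (fun q => energy μ p p1 κ q (ρ - q))
      (∫ v, ∫ y, Q (heat (ρ - q) (p y) (√q * v)) (heat (ρ - q) (p1 y) (√q * v))
        (heat (ρ - q) (p1 y) (√q * v)) (heat (ρ - q) (p2 y) (√q * v)) ∂μ ∂stdG) (Ioi q) q := by
  rw [hasDerivWithinAt_iff_tendsto_slope' (by simp)]
  have ht : 0 < ρ - q := sub_pos.2 hqρ
  have hsub : Tendsto (fun q' => q' - q) (𝓝[>] q) (𝓝[>] 0) := by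
    refine tendsto_nhdsWithin_iff.2 ⟨?_, ?_⟩
    · have : Tendsto (fun q' => q' - q) (𝓝 q) (𝓝 (q - q)) :=
        (continuous_id.sub continuous_const).tendsto q
      rw [sub_self] at this
      exact this.mono_left nhdsWithin_le_nhds
    · filter_upwards [self_mem_nhdsWithin] with q' hq'
      exact sub_pos.2 (mem_Ioi.1 hq')
  have key : Tendsto (fun ε => ∫ v, (∫ z, increment p p1 κ κM κN (ρ - q) ε (√q * v) z
      ∂(μ.prod stdG)) / ε ∂stdG) (𝓝[>] 0)
      (𝓝 (∫ v, ∫ y, Q (heat (ρ - q) (p y) (√q * v)) (heat (ρ - q) (p1 y) (√q * v))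
        (heat (ρ - q) (p1 y) (√q * v)) (heat (ρ - q) (p2 y) (√q * v)) ∂μ ∂stdG)) := by
    refine tendsto_integral_filter_of_dominated_convergence (fun _ => energyLip μ D) ?_ ?_
      (integrable_const _) (Eventually.of_forall fun v => tendsto_integral_increment h hκ ht _)
    · filter_upwards [Ioo_mem_nhdsGT ht] with ε hε
      exact (((measurable_integral_increment h hκ hε.1.le hε.2.le).comp
        (by fun_prop : Measurable fun v : ℝ => √q * v)).div_const ε).aestronglyMeasurable
    · filter_upwards [Ioo_mem_nhdsGT ht] with ε hε
      refine Eventually.of_forall fun v => ?_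
      rw [Real.norm_eq_abs, abs_div, abs_of_pos hε.1, div_le_iff₀ hε.1, mul_comm _ ε]
      exact abs_integral_increment_le h hκ hε.1.le hε.2.le _
  refine (key.comp hsub).congr' ?_
  filter_upwards [Ioo_mem_nhdsGT hqρ] with q' hq'
  have := energy_sub h hκ (q := q) (t := ρ - q) (ε := q' - q) hq (by linarith [hq'.1])
    (by linarith [hq'.2])
  rw [show q + (q' - q) = q' by ring, show ρ - q - (q' - q) = ρ - q' by ring] at this
  rw [slope_def_field, this, Function.comp, integral_div]

end DensityFamily

section Integrands

open Set Filter Topology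

lemma tendsto_slope_zero_right {f : ℝ → ℝ} {m : ℝ} (hf : HasDerivAt f m 0) :
    Tendsto (fun s => (f s - f 0) / s) (𝓝[>] 0) (𝓝 m) := by
  have := (hasDerivAt_iff_tendsto_slope_zero.1 hf).mono_left
    (nhdsWithin_mono 0 (fun s hs => ne_of_gt hs : Ioi (0 : ℝ) ⊆ {0}ᶜ))
  refine this.congr fun s => ?_
  simp [div_eq_inv_mul]

lemma abs_log_le_of_mem {D M : ℝ} (hD : 1 ≤ D) (h1 : D⁻¹ ≤ M) (h2 : M ≤ D) :
    |log M| ≤ D - 1 := by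
  have hD0 : 0 < D := by linarith
  have hM : 0 < M := (inv_pos.2 hD0).trans_le h1
  have hl : log D ≤ D - 1 := log_le_sub_one_of_pos hD0
  rw [abs_le]
  constructor
  · have := log_le_log (inv_pos.2 hD0) h1
    rw [log_inv] at this
    linarith
  · exact (log_le_log hM h2).trans hl

lemma abs_mul_log_one_add_sub_le {z : ℝ} (hz : |z| ≤ 1 / 2) :
    |(1 + z) * log (1 + z) - z - z ^ 2 / 2| ≤ 4 * |z| ^ 3 := by
  have h := abs_log_sub_add_sum_range_le (x := -z) (by rw [abs_neg]; linarith) 2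
  simp only [Finset.sum_range_succ, Finset.sum_range_zero, sub_neg_eq_add, abs_neg] at h
  norm_num at h
  have h3 : |z| ^ 3 / (1 - |z|) ≤ 2 * |z| ^ 3 := by
    rw [div_le_iff₀ (by linarith)]
    nlinarith [pow_nonneg (abs_nonneg z) 3]
  have hr := h.trans h3
  have e : (1 + z) * log (1 + z) - z - z ^ 2 / 2
      = (1 + z) * (-z + z ^ 2 / 2 + log (1 + z)) - z ^ 3 / 2 := by ring
  rw [e]
  have h1 : |1 + z| ≤ 3 / 2 := by
    rw [abs_le] at hz ⊢; constructor <;> linarith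
  have h4 : |z ^ 3 / 2| = |z| ^ 3 / 2 := by rw [abs_div, abs_pow]; norm_num
  calc |(1 + z) * (-z + z ^ 2 / 2 + log (1 + z)) - z ^ 3 / 2|
      ≤ |(1 + z) * (-z + z ^ 2 / 2 + log (1 + z))| + |z ^ 3 / 2| := abs_sub _ _
    _ ≤ 3 / 2 * (2 * |z| ^ 3) + |z| ^ 3 / 2 := by
        rw [abs_mul, h4]
        gcongr
    _ ≤ 4 * |z| ^ 3 := by nlinarith [pow_nonneg (abs_nonneg z) 3]

lemma remainder_mul_log {M₁ M₂ : ℝ} (N₁ N₂ : ℝ) (h1 : 0 < M₁) (h2 : 0 < M₂) :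
    remainder (fun M _ => M * log M) (fun M _ => log M + 1) (fun _ _ => 0) M₁ N₁ M₂ N₂
      = M₂ * log (M₂ / M₁) - (M₂ - M₁) := by
  rw [log_div h2.ne' h1.ne']; unfold remainder; ring

lemma remainder_mul_log_nonneg {M₁ M₂ : ℝ} (h1 : 0 < M₁) (h2 : 0 < M₂) :
    0 ≤ M₂ * log (M₂ / M₁) - (M₂ - M₁) := by
  have h := one_sub_inv_le_log_of_pos (div_pos h2 h1)
  have := mul_le_mul_of_nonneg_left h h2.le
  rw [inv_div, mul_sub, mul_div_cancel₀ _ h2.ne'] at this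
  linarith

lemma remainder_mul_log_le {M₁ M₂ : ℝ} (h1 : 0 < M₁) (h2 : 0 < M₂) :
    M₂ * log (M₂ / M₁) - (M₂ - M₁) ≤ (M₂ - M₁) ^ 2 / M₁ := by
  have h := log_le_sub_one_of_pos (div_pos h2 h1)
  have := mul_le_mul_of_nonneg_left h h2.le
  have e : M₂ * (M₂ / M₁ - 1) - (M₂ - M₁) = (M₂ - M₁) ^ 2 / M₁ := by field_simp
  linarith

lemma tendsto_remainder_mul_log {f : ℝ → ℝ} {m : ℝ} (h0 : 0 < f 0) (hf : HasDerivAt f m 0) :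
    Tendsto (fun s => (f s * log (f s / f 0) - (f s - f 0)) / s ^ 2) (𝓝[>] 0)
      (𝓝 (m ^ 2 / (2 * f 0))) := by
  have hc : Tendsto f (𝓝[>] 0) (𝓝 (f 0)) :=
    hf.continuousAt.tendsto.mono_left nhdsWithin_le_nhds
  have hz : Tendsto (fun s => (f s - f 0) / f 0) (𝓝[>] 0) (𝓝 0) := by
    simpa using (hc.sub_const (f 0)).div_const (f 0)
  have hs := tendsto_slope_zero_right hf
  have hmain : Tendsto (fun s => f 0 * (((f s - f 0) / s / f 0) ^ 2 / 2)) (𝓝[>] 0)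
      (𝓝 (m ^ 2 / (2 * f 0))) := by
    have : m ^ 2 / (2 * f 0) = f 0 * ((m / f 0) ^ 2 / 2) := by field_simp
    rw [this]
    exact (((hs.div_const (f 0)).pow 2).div_const 2).const_mul (f 0)
  have hbd : Tendsto (fun s => f 0 * (4 * (((f s - f 0) / s / f 0) ^ 2 * |(f s - f 0) / f 0|)))
      (𝓝[>] 0) (𝓝 0) := by
    have := ((((hs.div_const (f 0)).pow 2).mul hz.abs).const_mul 4).const_mul (f 0)
    simpa using this
  have herr : Tendsto (fun s => (f s * log (f s / f 0) - (f s - f 0)) / s ^ 2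
      - f 0 * (((f s - f 0) / s / f 0) ^ 2 / 2)) (𝓝[>] 0) (𝓝 0) := by
    refine squeeze_zero_norm' ?_ hbd
    have hsmall : ∀ᶠ s in 𝓝[>] (0 : ℝ), |(f s - f 0) / f 0| < 1 / 2 := by
      have := hz.abs
      rw [abs_zero] at this
      exact this.eventually_lt_const (by norm_num)
    filter_upwards [hsmall, self_mem_nhdsWithin] with s hs1 hs2
    have hs0 : (0 : ℝ) < s := hs2
    have hb := abs_mul_log_one_add_sub_le hs1.le
    set z := (f s - f 0) / f 0 with hzdef
    have e1 : f s / f 0 = 1 + z := by rw [hzdef]; field_simp; ring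
    have e2 : f s = f 0 * (1 + z) := by rw [hzdef]; field_simp; ring
    have e3 : f s - f 0 = f 0 * z := by rw [hzdef]; field_simp
    have e4 : (f s - f 0) / s / f 0 = z / s := by rw [hzdef]; field_simp
    have e5 : (f s * log (f s / f 0) - (f s - f 0)) / s ^ 2 - f 0 * ((z / s) ^ 2 / 2)
        = f 0 * (((1 + z) * log (1 + z) - z - z ^ 2 / 2) / s ^ 2) := by
      rw [e1, e3, e2]; field_simp
    rw [e4, e5, norm_mul, Real.norm_eq_abs, Real.norm_eq_abs, abs_of_pos h0, abs_div,
      abs_of_pos (pow_pos hs0 2)]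
    refine mul_le_mul_of_nonneg_left ?_ h0.le
    rw [div_le_iff₀ (pow_pos hs0 2)]
    refine hb.trans_eq ?_
    rw [div_pow, ← sq_abs z]
    field_simp
  simpa using herr.add hmain

lemma le_four_mul_pow {D : ℝ} (hD : 1 ≤ D) {n : ℕ} (hn : n ≤ 8) : D ^ n ≤ 4 * D ^ 8 := by
  have h1 := pow_le_pow_right₀ hD hn
  have h2 : 0 ≤ D ^ 8 := by positivity
  linarith

lemma integrand_mul_log : Integrand (fun M _ => M * log M) (fun M _ => log M + 1) (fun _ _ => 0)
    (fun M _ m _ => m ^ 2 / (2 * M)) where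
  meas := by fun_prop
  measM := by fun_prop
  measN := by fun_prop
  bound := by
    intro D M N hD h1 h2 _
    have hl := abs_log_le_of_mem hD h1 h2
    have hM : 0 < M := (inv_pos.2 (by linarith)).trans_le h1
    refine le_trans ?_ (le_four_mul_pow hD (n := 2) (by norm_num))
    rw [abs_mul, abs_of_pos hM]
    nlinarith [abs_nonneg (log M)]
  boundM := by
    intro D M N hD h1 h2 _
    have hl := abs_log_le_of_mem hD h1 h2
    refine le_trans ?_ (le_four_mul_pow hD (n := 1) (by norm_num))
    rw [pow_one]
    refine (abs_add_le _ _).trans ?_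
    rw [abs_one]
    linarith
  boundN := by
    intro D M N hD _ _ _
    rw [abs_zero]
    positivity
  rem_le := by
    intro D M₁ N₁ M₂ N₂ hD h1 _ _ h2 _ _
    have hD0 : 0 < D⁻¹ := inv_pos.2 (by linarith)
    have hM1 := hD0.trans_le h1
    have hM2 := hD0.trans_le h2
    rw [remainder_mul_log _ _ hM1 hM2, abs_of_nonneg (remainder_mul_log_nonneg hM1 hM2)]
    refine (remainder_mul_log_le hM1 hM2).trans ?_
    have h3 : M₁⁻¹ ≤ D ^ 1 := by rw [pow_one]; exact inv_le_of_inv_le₀ (by linarith) h1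
    have h4 := h3.trans (le_four_mul_pow hD (by norm_num))
    rw [div_eq_inv_mul]
    have h5 : 0 ≤ 4 * D ^ 8 := by positivity
    nlinarith [mul_le_mul_of_nonneg_right h4 (sq_nonneg (M₂ - M₁)),
      mul_nonneg h5 (sq_nonneg (N₂ - N₁))]
  tendsto_rem := by
    intro f g m n h0 hf _
    refine (tendsto_remainder_mul_log h0 hf).congr' ?_
    have hpos : ∀ᶠ s in 𝓝[>] (0 : ℝ), 0 < f s :=
      (hf.continuousAt.tendsto.mono_left nhdsWithin_le_nhds).eventually_const_lt h0
    filter_upwards [hpos] with s hs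
    rw [remainder_mul_log _ _ h0 hs]
  homog := by intro M N c m n; ring

lemma remainder_sq_div {M₁ M₂ : ℝ} (N₁ N₂ : ℝ) (h1 : 0 < M₁) (h2 : 0 < M₂) :
    remainder (fun M N => N ^ 2 / (2 * M)) (fun M N => -(N ^ 2 / (2 * M ^ 2)))
      (fun M N => N / M) M₁ N₁ M₂ N₂ = (N₂ - N₁ * M₂ / M₁) ^ 2 / (2 * M₂) := by
  unfold remainder; field_simp; ring

lemma integrand_sq_div : Integrand (fun M N => N ^ 2 / (2 * M))
    (fun M N => -(N ^ 2 / (2 * M ^ 2))) (fun M N => N / M)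
    (fun M N m n => (n - N * m / M) ^ 2 / (2 * M)) where
  meas := by fun_prop
  measM := by fun_prop
  measN := by fun_prop
  bound := by
    intro D M N hD h1 h2 hN
    have hM : 0 < M := (inv_pos.2 (by linarith)).trans_le h1
    have h3 : M⁻¹ ≤ D := inv_le_of_inv_le₀ (by linarith) h1
    refine le_trans ?_ (le_four_mul_pow hD (n := 3) (by norm_num))
    have e : |N ^ 2 / (2 * M)| = |N| ^ 2 * M⁻¹ / 2 := by
      rw [abs_div, abs_pow, abs_of_pos (by positivity : 0 < 2 * M)]; field_simp
    rw [e]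
    have : |N| ^ 2 * M⁻¹ ≤ D ^ 2 * D := by gcongr
    nlinarith [pow_nonneg (by linarith : 0 ≤ D) 3]
  boundM := by
    intro D M N hD h1 h2 hN
    have hM : 0 < M := (inv_pos.2 (by linarith)).trans_le h1
    have h3 : M⁻¹ ≤ D := inv_le_of_inv_le₀ (by linarith) h1
    refine le_trans ?_ (le_four_mul_pow hD (n := 4) (by norm_num))
    have e : |-(N ^ 2 / (2 * M ^ 2))| = |N| ^ 2 * M⁻¹ ^ 2 / 2 := by
      rw [abs_neg, abs_div, abs_pow, abs_of_pos (by positivity : 0 < 2 * M ^ 2)]; field_simp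
    rw [e]
    have : |N| ^ 2 * M⁻¹ ^ 2 ≤ D ^ 2 * D ^ 2 := by gcongr
    nlinarith [pow_nonneg (by linarith : 0 ≤ D) 4]
  boundN := by
    intro D M N hD h1 h2 hN
    have hM : 0 < M := (inv_pos.2 (by linarith)).trans_le h1
    have h3 : M⁻¹ ≤ D := inv_le_of_inv_le₀ (by linarith) h1
    refine le_trans ?_ (le_four_mul_pow hD (n := 2) (by norm_num))
    rw [abs_div, abs_of_pos hM, div_eq_mul_inv, sq]
    gcongr
  rem_le := by
    intro D M₁ N₁ M₂ N₂ hD h1 _ hN1 h2 _ _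
    have hD0 : 0 < D⁻¹ := inv_pos.2 (by linarith)
    have hM1 := hD0.trans_le h1
    have hM2 := hD0.trans_le h2
    rw [remainder_sq_div _ _ hM1 hM2, abs_of_nonneg (by positivity)]
    have i1 : M₁⁻¹ ≤ D := inv_le_of_inv_le₀ (by linarith) h1
    have i2 : M₂⁻¹ ≤ D := inv_le_of_inv_le₀ (by linarith) h2
    set r := N₁ * M₁⁻¹ with hr
    have hrD : r ^ 2 ≤ D ^ 4 := by
      rw [hr, ← sq_abs, abs_mul, abs_of_pos (inv_pos.2 hM1)]
      calc (|N₁| * M₁⁻¹) ^ 2 ≤ (D * D) ^ 2 := by gcongr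
        _ = D ^ 4 := by ring
    have e : N₂ - N₁ * M₂ / M₁ = (N₂ - N₁) - r * (M₂ - M₁) := by rw [hr]; field_simp; ring
    have hsq : (N₂ - N₁ * M₂ / M₁) ^ 2
        ≤ 2 * D ^ 4 * ((M₂ - M₁) ^ 2 + (N₂ - N₁) ^ 2) := by
      rw [e]
      have hD4 : 1 ≤ D ^ 4 := one_le_pow₀ hD
      nlinarith [sq_nonneg ((N₂ - N₁) + r * (M₂ - M₁)), sq_nonneg (M₂ - M₁),
        mul_le_mul_of_nonneg_right hrD (sq_nonneg (M₂ - M₁)),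
        mul_le_mul_of_nonneg_right hD4 (sq_nonneg (N₂ - N₁))]
    have hS : 0 ≤ (M₂ - M₁) ^ 2 + (N₂ - N₁) ^ 2 := by positivity
    calc (N₂ - N₁ * M₂ / M₁) ^ 2 / (2 * M₂)
        = (N₂ - N₁ * M₂ / M₁) ^ 2 * M₂⁻¹ / 2 := by field_simp
      _ ≤ 2 * D ^ 4 * ((M₂ - M₁) ^ 2 + (N₂ - N₁) ^ 2) * D / 2 := by gcongr
      _ = D ^ 5 * ((M₂ - M₁) ^ 2 + (N₂ - N₁) ^ 2) := by ring
      _ ≤ _ := mul_le_mul_of_nonneg_right (le_four_mul_pow hD (by norm_num)) hS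
  tendsto_rem := by
    intro f g m n h0 hf hg
    have hc : Tendsto f (𝓝[>] 0) (𝓝 (f 0)) :=
      hf.continuousAt.tendsto.mono_left nhdsWithin_le_nhds
    have hG : HasDerivAt (fun s => g s - g 0 * f s / f 0) (n - g 0 * m / f 0) 0 :=
      hg.sub ((hf.const_mul (g 0)).div_const (f 0))
    have hl := ((tendsto_slope_zero_right hG).pow 2).div (hc.const_mul 2) (by positivity)
    refine hl.congr' ?_
    filter_upwards [hc.eventually_const_lt h0, self_mem_nhdsWithin] with s hs hs2
    have hs0 : (0 : ℝ) < s := hs2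
    rw [remainder_sq_div _ _ h0 hs, Pi.div_apply, mul_div_assoc (g 0) (f 0), div_self h0.ne',
      mul_one, sub_self, sub_zero, div_pow]
    field_simp
  homog := by intro M N c m n; ring

end Integrands

section SecondDerivative

open Set Filter Topology

lemma measurable_heat_right {F : ℝ → ℝ} (hF : Measurable F) (t : ℝ) : Measurable (heat t F) :=
  (measurable_heat (Y := Unit) (p := fun _ => F) (hF.comp measurable_snd) t).comp
    (measurable_prodMk_left (x := ()))

lemma measurable_heat_path {F : ℝ → ℝ} (hF : Measurable F) (t c : ℝ) :
    Measurable fun v => heat t F (c * v) := (measurable_heat_right hF t).comp (by fun_prop)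

lemma continuous_heat_path {F : ℝ → ℝ} {C : ℝ} (hF : Continuous F) (hb : ∀ x, |F x| ≤ C)
    (ρ v : ℝ) : Continuous fun q => heat (ρ - q) F (√q * v) := by
  refine continuous_of_dominated (bound := fun _ => C) (fun q => ?_)
    (fun q => Eventually.of_forall fun w => hb _) (integrable_const C)
    (Eventually.of_forall fun w => by fun_prop)
  exact (by fun_prop : Measurable fun w => F (√q * v + √(ρ - q) * w)).aestronglyMeasurable

lemma integral_abs_heat_sub_le {F G : ℝ → ℝ} {C C' q ρ : ℝ} (hF : Measurable F)
    (hb : ∀ x, |F x| ≤ C) (hG : Measurable G) (hb' : ∀ x, |G x| ≤ C') (hq : q ∈ Icc 0 ρ) :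
    ∫ v, |heat (ρ - q) F (√q * v) - heat (ρ - q) G (√q * v)| ∂stdG
      ≤ ∫ v, |F (√ρ * v) - G (√ρ * v)| ∂stdG := by
  have hm : Measurable fun x => |F x - G x| := (hF.sub hG).norm
  have hbd : ∀ x, |(|F x - G x|)| ≤ C + C' := fun x => by
    rw [abs_abs]; exact (abs_sub _ _).trans (add_le_add (hb x) (hb' x))
  have e := integral_heat hq.1 (sub_nonneg.2 hq.2) hm hbd
  rw [add_sub_cancel] at e
  rw [← e]
  refine integral_mono (integrable_of_bounded (C := C + C')
    ((measurable_heat_path hF _ _).sub (measurable_heat_path hG _ _)).norm fun v => ?_)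
    (integrable_of_bounded (measurable_heat_path hm _ _) fun v => abs_heat_le hm hbd _ _)
    fun v => ?_
  · rw [abs_abs]
    exact (abs_sub _ _).trans (add_le_add (abs_heat_le hF hb _ _) (abs_heat_le hG hb' _ _))
  · simp only [heat]
    rw [← integral_sub (integrable_heat_integrand hF hb _ _)
      (integrable_heat_integrand hG hb' _ _)]
    exact abs_integral_le_integral_abs

lemma tendsto_integral_abs_heat_sub {F : ℝ → ℝ} {C q₀ ρ : ℝ} (hF : Measurable F)
    (hb : ∀ x, |F x| ≤ C) (hq₀ : q₀ ∈ Icc 0 ρ) :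
    Tendsto (fun q => ∫ v, |heat (ρ - q) F (√q * v) - heat (ρ - q₀) F (√q₀ * v)| ∂stdG)
      (𝓝[Icc 0 ρ] q₀) (𝓝 0) := by
  have hmap : Measurable fun v : ℝ => √ρ * v := by fun_prop
  have : IsProbabilityMeasure (stdG.map fun v : ℝ => √ρ * v) :=
    Measure.isProbabilityMeasure_map hmap.aemeasurable
  rw [Metric.tendsto_nhds]
  intro ε hε
  obtain ⟨g, hg, -⟩ := (integrable_of_bounded (μ := stdG.map fun v : ℝ => √ρ * v) hF
    hb).exists_boundedContinuous_integral_sub_le (ε := ε / 4) (by positivity)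
  have hgb : ∀ x, |g x| ≤ ‖g‖ := fun x => g.norm_coe_le_norm x
  have hgm : Measurable g := g.continuous.measurable
  have hmn : Measurable fun x => ‖F x - g x‖ := (hF.sub hgm).norm
  rw [integral_map hmap.aemeasurable hmn.aestronglyMeasurable] at hg
  have hB : Tendsto (fun q => ∫ v, |heat (ρ - q) g (√q * v) - heat (ρ - q₀) g (√q₀ * v)| ∂stdG)
      (𝓝 q₀) (𝓝 0) := by
    have : Tendsto (fun q => ∫ v, |heat (ρ - q) g (√q * v) - heat (ρ - q₀) g (√q₀ * v)| ∂stdG)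
        (𝓝 q₀) (𝓝 (∫ v, |heat (ρ - q₀) g (√q₀ * v) - heat (ρ - q₀) g (√q₀ * v)| ∂stdG)) := by
      refine tendsto_integral_filter_of_dominated_convergence (fun _ => ‖g‖ + ‖g‖) ?_ ?_
        (integrable_const _) (Eventually.of_forall fun v => ?_)
      · exact Eventually.of_forall fun q => (((measurable_heat_path hgm _ _).sub
          (measurable_heat_path hgm _ _)).norm).aestronglyMeasurable
      · refine Eventually.of_forall fun q => Eventually.of_forall fun v => ?_
        rw [Real.norm_eq_abs, abs_abs]
        exact (abs_sub _ _).trans (add_le_add (abs_heat_le hgm hgb _ _)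
          (abs_heat_le hgm hgb _ _))
      · exact (((continuous_heat_path g.continuous hgb ρ v).tendsto q₀).sub_const _).abs
    simpa using this
  have hev := (hB.mono_left (nhdsWithin_le_nhds (s := Icc 0 ρ))).eventually_lt_const
    (by positivity : 0 < ε / 4)
  filter_upwards [hev, self_mem_nhdsWithin (a := q₀) (s := Icc 0 ρ)] with q hq hqI
  rw [Real.dist_eq, sub_zero, abs_of_nonneg (integral_nonneg fun v => abs_nonneg _)]
  have h1 := (integral_abs_heat_sub_le hF hb hgm hgb hqI).trans hg
  have h2 := (integral_abs_heat_sub_le hF hb hgm hgb hq₀).trans hg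
  have iI : ∀ (A B : ℝ → ℝ) (CA CB s r : ℝ) (x y : ℝ), Measurable A → (∀ x, |A x| ≤ CA) →
      Measurable B → (∀ x, |B x| ≤ CB) →
      Integrable (fun v => |heat s A (x * v) - heat r B (y * v)|) stdG := by
    intro A B CA CB s r x y hA hA' hB hB'
    refine integrable_of_bounded (C := CA + CB) ((measurable_heat_path hA _ _).sub
      (measurable_heat_path hB _ _)).norm fun v => ?_
    rw [abs_abs]
    exact (abs_sub _ _).trans (add_le_add (abs_heat_le hA hA' _ _) (abs_heat_le hB hB' _ _))
  have i1 := iI F g _ _ (ρ - q) (ρ - q) (√q) (√q) hF hb hgm hgb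
  have i2 := iI F g _ _ (ρ - q₀) (ρ - q₀) (√q₀) (√q₀) hF hb hgm hgb
  have i3 := iI g g _ _ (ρ - q) (ρ - q₀) (√q) (√q₀) hgm hgb hgm hgb
  have i4 := iI F F _ _ (ρ - q) (ρ - q₀) (√q) (√q₀) hF hb hF hb
  have hle := integral_mono i4 ((i1.add i3).add i2) fun v => by
    simp only [Pi.add_apply]
    have a1 := abs_sub_le (heat (ρ - q) F (√q * v)) (heat (ρ - q) g (√q * v))
      (heat (ρ - q₀) F (√q₀ * v))
    have a2 := abs_sub_le (heat (ρ - q) g (√q * v)) (heat (ρ - q₀) g (√q₀ * v))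
      (heat (ρ - q₀) F (√q₀ * v))
    rw [abs_sub_comm (heat (ρ - q₀) g (√q₀ * v))] at a2
    linarith
  rw [integral_add' (i1.add i3) i2, integral_add' i1 i3] at hle
  linarith

/-- The quadratic form of `N ^ 2 / (2 * M)`, along `m = N`. -/
def curv (M N n : ℝ) : ℝ := (n - N * N / M) ^ 2 / (2 * M)

lemma curv_nonneg {M : ℝ} (hM : 0 < M) (N n : ℝ) : 0 ≤ curv M N n := by
  unfold curv; positivity

lemma measurable_curv : Measurable fun z : ℝ × ℝ × ℝ => curv z.1 z.2.1 z.2.2 := by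
  unfold curv; fun_prop

lemma abs_mul_self_div_le {D M N : ℝ} (hD : 1 ≤ D) (h1 : D⁻¹ ≤ M) (hN : |N| ≤ D) :
    |N * N / M| ≤ D ^ 3 := by
  have hM : 0 < M := (inv_pos.2 (by linarith)).trans_le h1
  have h3 : M⁻¹ ≤ D := inv_le_of_inv_le₀ (by linarith) h1
  rw [abs_div, abs_mul, abs_of_pos hM, div_eq_mul_inv]
  calc |N| * |N| * M⁻¹ ≤ D * D * D := by gcongr
    _ = D ^ 3 := by ring

lemma abs_curv_le {D M N n : ℝ} (hD : 1 ≤ D) (h1 : D⁻¹ ≤ M) (hN : |N| ≤ D) (hn : |n| ≤ D) :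
    |curv M N n| ≤ 2 * D ^ 7 := by
  have hM : 0 < M := (inv_pos.2 (by linarith)).trans_le h1
  have h3 : M⁻¹ ≤ D := inv_le_of_inv_le₀ (by linarith) h1
  have h4 := abs_mul_self_div_le hD h1 hN
  have h5 : |n - N * N / M| ≤ 2 * D ^ 3 := by
    have : D ≤ D ^ 3 := le_self_pow₀ hD (by norm_num)
    exact (abs_sub _ _).trans (by linarith)
  rw [abs_of_nonneg (curv_nonneg hM N n), curv, ← sq_abs]
  calc |n - N * N / M| ^ 2 / (2 * M) = |n - N * N / M| ^ 2 * M⁻¹ / 2 := by field_simp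
    _ ≤ (2 * D ^ 3) ^ 2 * D / 2 := by gcongr
    _ = 2 * D ^ 7 := by ring

lemma abs_curv_sub_le {D M N n n' : ℝ} (hD : 1 ≤ D) (h1 : D⁻¹ ≤ M) (hN : |N| ≤ D)
    (hn : |n| ≤ D) (hn' : |n'| ≤ D) :
    |curv M N n - curv M N n'| ≤ 2 * D ^ 4 * |n - n'| := by
  have hM : 0 < M := (inv_pos.2 (by linarith)).trans_le h1
  have h3 : M⁻¹ ≤ D := inv_le_of_inv_le₀ (by linarith) h1
  have h4 := abs_mul_self_div_le hD h1 hN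
  have hD3 : D ≤ D ^ 3 := le_self_pow₀ hD (by norm_num)
  have e : curv M N n - curv M N n'
      = ((n - N * N / M) + (n' - N * N / M)) * M⁻¹ / 2 * (n - n') := by
    unfold curv; field_simp; ring
  rw [e, abs_mul]
  refine mul_le_mul_of_nonneg_right ?_ (abs_nonneg _)
  have h5 : |(n - N * N / M) + (n' - N * N / M)| ≤ 4 * D ^ 3 := by
    refine (abs_add_le _ _).trans ?_
    have := abs_sub n (N * N / M)
    have := abs_sub n' (N * N / M)
    linarith
  rw [abs_div, abs_mul, abs_of_pos (inv_pos.2 hM), abs_two]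
  calc |(n - N * N / M) + (n' - N * N / M)| * M⁻¹ / 2 ≤ 4 * D ^ 3 * D / 2 := by gcongr
    _ = 2 * D ^ 4 := by ring

lemma continuousOn_integral_curv {F₀ F₁ F₂ : ℝ → ℝ} {D ρ : ℝ} (hD : 1 ≤ D)
    (h0 : Continuous F₀) (h1 : Continuous F₁) (h2 : Measurable F₂) (hinv : ∀ x, D⁻¹ ≤ F₀ x)
    (hle : ∀ x, F₀ x ≤ D) (hb1 : ∀ x, |F₁ x| ≤ D) (hb2 : ∀ x, |F₂ x| ≤ D) :
    ContinuousOn (fun q => ∫ v, curv (heat (ρ - q) F₀ (√q * v)) (heat (ρ - q) F₁ (√q * v))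
      (heat (ρ - q) F₂ (√q * v)) ∂stdG) (Icc 0 ρ) := by
  intro q₀ hq₀
  have hD0 : 0 < D := by linarith
  have hb0 : ∀ x, |F₀ x| ≤ D := fun x => by
    rw [abs_of_pos ((inv_pos.2 hD0).trans_le (hinv x))]; exact hle x
  have u0 : ∀ t x, D⁻¹ ≤ heat t F₀ x := fun t x => le_heat h0.measurable hb0 hinv t x
  have u1 : ∀ t x, |heat t F₁ x| ≤ D := fun t x => abs_heat_le h1.measurable hb1 t x
  have u2 : ∀ t x, |heat t F₂ x| ≤ D := fun t x => abs_heat_le h2 hb2 t x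
  have hm : ∀ s c r d, Measurable fun v => curv (heat s F₀ (c * v)) (heat s F₁ (c * v))
      (heat r F₂ (d * v)) := fun s c r d =>
    measurable_curv.comp ((measurable_heat_path h0.measurable s c).prodMk
      ((measurable_heat_path h1.measurable s c).prodMk (measurable_heat_path h2 r d)))
  have hi : ∀ s c r d, Integrable (fun v => curv (heat s F₀ (c * v)) (heat s F₁ (c * v))
      (heat r F₂ (d * v))) stdG := fun s c r d =>
    integrable_of_bounded (hm s c r d) fun v => abs_curv_le hD (u0 _ _) (u1 _ _) (u2 _ _)
  have hfix : Tendsto (fun q => ∫ v, curv (heat (ρ - q) F₀ (√q * v)) (heat (ρ - q) F₁ (√q * v))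
      (heat (ρ - q₀) F₂ (√q₀ * v)) ∂stdG) (𝓝[Icc 0 ρ] q₀)
      (𝓝 (∫ v, curv (heat (ρ - q₀) F₀ (√q₀ * v)) (heat (ρ - q₀) F₁ (√q₀ * v))
      (heat (ρ - q₀) F₂ (√q₀ * v)) ∂stdG)) := by
    refine tendsto_integral_filter_of_dominated_convergence (fun _ => 2 * D ^ 7)
      (Eventually.of_forall fun q => (hm _ _ _ _).aestronglyMeasurable)
      (Eventually.of_forall fun q => Eventually.of_forall fun v =>
        abs_curv_le hD (u0 _ _) (u1 _ _) (u2 _ _))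
      (integrable_const _) (Eventually.of_forall fun v => ?_)
    have c0 := ((continuous_heat_path h0 hb0 ρ v).tendsto q₀).mono_left
      (nhdsWithin_le_nhds (s := Icc 0 ρ))
    have c1 := ((continuous_heat_path h1 hb1 ρ v).tendsto q₀).mono_left
      (nhdsWithin_le_nhds (s := Icc 0 ρ))
    have hne : heat (ρ - q₀) F₀ (√q₀ * v) ≠ 0 := ((inv_pos.2 hD0).trans_le (u0 _ _)).ne'
    exact ((((c1.mul c1).div c0 hne).const_sub _).pow 2).div (c0.const_mul 2)
      (mul_ne_zero two_ne_zero hne)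
  have hdiff : Tendsto (fun q => ∫ v, curv (heat (ρ - q) F₀ (√q * v)) (heat (ρ - q) F₁ (√q * v))
      (heat (ρ - q) F₂ (√q * v)) ∂stdG - ∫ v, curv (heat (ρ - q) F₀ (√q * v))
      (heat (ρ - q) F₁ (√q * v)) (heat (ρ - q₀) F₂ (√q₀ * v)) ∂stdG) (𝓝[Icc 0 ρ] q₀) (𝓝 0) := by
    have hA := (tendsto_integral_abs_heat_sub h2 hb2 hq₀).const_mul (2 * D ^ 4)
    rw [mul_zero] at hA
    refine squeeze_zero_norm (fun q => ?_) hA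
    rw [← integral_sub (hi _ _ _ _) (hi _ _ _ _), ← integral_const_mul]
    refine norm_integral_le_of_norm_le (Integrable.const_mul ?_ _)
      (Eventually.of_forall fun v =>
        abs_curv_sub_le hD (u0 _ _) (u1 _ _) (u2 _ _) (u2 _ _))
    refine integrable_of_bounded (C := D + D) ((measurable_heat_path h2 _ _).sub
      (measurable_heat_path h2 _ _)).norm fun v => ?_
    rw [abs_abs]
    exact (abs_sub _ _).trans (add_le_add (u2 _ _) (u2 _ _))
  have := hdiff.add hfix
  simpa [ContinuousWithinAt] using this

namespace DensityFamily

variable {Y : Type*} [MeasurableSpace Y] {μ : Measure Y} {p p1 p2 : Y → ℝ → ℝ} {D : Y → ℝ}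

lemma measurable_curv_heat (h : DensityFamily μ p p1 p2 D) (t c : ℝ) :
    Measurable fun z : Y × ℝ => curv (heat t (p z.1) (c * z.2)) (heat t (p1 z.1) (c * z.2))
      (heat t (p2 z.1) (c * z.2)) := by
  have hs : Measurable fun z : Y × ℝ => (z.1, c * z.2) := by fun_prop
  exact measurable_curv.comp (((measurable_heat h.meas t).comp hs).prodMk
    (((measurable_heat h.meas1 t).comp hs).prodMk ((measurable_heat h.meas2 t).comp hs)))

lemma abs_curv_heat_le (h : DensityFamily μ p p1 p2 D) (t x : ℝ) (y : Y) :
    |curv (heat t (p y) x) (heat t (p1 y) x) (heat t (p2 y) x)| ≤ 2 * D y ^ 7 :=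
  abs_curv_le (h.one_le y) (h.inv_le_heat t y x) (h.abs_heat1_le t y x) (h.abs_heat2_le t y x)

lemma continuousOn_curvature [IsProbabilityMeasure μ] (h : DensityFamily μ p p1 p2 D) (ρ : ℝ) :
    ContinuousOn (fun q => ∫ v, ∫ y, curv (heat (ρ - q) (p y) (√q * v))
      (heat (ρ - q) (p1 y) (√q * v)) (heat (ρ - q) (p2 y) (√q * v)) ∂μ ∂stdG) (Icc 0 ρ) := by
  have hswap : ∀ q, ∫ v, ∫ y, curv (heat (ρ - q) (p y) (√q * v))
      (heat (ρ - q) (p1 y) (√q * v)) (heat (ρ - q) (p2 y) (√q * v)) ∂μ ∂stdG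
      = ∫ y, ∫ v, curv (heat (ρ - q) (p y) (√q * v))
      (heat (ρ - q) (p1 y) (√q * v)) (heat (ρ - q) (p2 y) (√q * v)) ∂stdG ∂μ := fun q => by
    have hi := integrable_of_measurable_of_abs_le (((h.int_pow 7).const_mul 2).comp_fst stdG)
      (h.measurable_curv_heat (ρ - q) (√q)) fun z => h.abs_curv_heat_le _ _ _
    exact (integral_integral_swap (by exact hi)).symm
  simp_rw [hswap]
  intro q₀ hq₀
  refine tendsto_integral_filter_of_dominated_convergence (fun y => 2 * D y ^ 7) ?_ ?_
    ((h.int_pow 7).const_mul 2) (Eventually.of_forall fun y => ?_)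
  · exact Eventually.of_forall fun q => ((h.measurable_curv_heat (ρ - q)
      (√q)).stronglyMeasurable.integral_prod_right').aestronglyMeasurable
  · refine Eventually.of_forall fun q => Eventually.of_forall fun y => ?_
    refine (norm_integral_le_of_norm_le (integrable_const _) (Eventually.of_forall fun v =>
      h.abs_curv_heat_le _ _ _)).trans ?_
    simp
  · exact continuousOn_integral_curv (h.one_le y)
      (continuous_iff_continuousAt.2 fun x => (h.deriv1 y x).continuousAt)
      (continuous_iff_continuousAt.2 fun x => (h.deriv2 y x).continuousAt) (h.meas2_right y)
      (h.inv_le y) (h.le y) (h.abs1_le y) (h.abs2_le y) q₀ hq₀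

end DensityFamily

end SecondDerivative

section RightDerivative

open Set Filter Topology

lemma hasDerivWithinAt_Icc_of_right {f g : ℝ → ℝ} {a b : ℝ} (hf : ContinuousOn f (Icc a b))
    (hg : ContinuousOn g (Icc a b)) (hd : ∀ x ∈ Ioo a b, HasDerivWithinAt f (g x) (Ioi x) x)
    {x : ℝ} (hx : x ∈ Icc a b) : HasDerivWithinAt f (g x) (Icc a b) x := by
  have hab : a ≤ b := hx.1.trans hx.2
  set G : ℝ → ℝ := IccExtend hab ((Icc a b).domRestrict g) with hGdef
  have hG : Continuous G := (continuousOn_iff_continuous_domRestrict.1 hg).Icc_extend'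
  have hGg : ∀ z ∈ Icc a b, G z = g z := fun z hz => by rw [hGdef, IccExtend_of_mem _ _ hz]; rfl
  have hFTC : ∀ z ∈ Icc a b, f z = f a + ∫ s in a..z, G s := by
    intro z hz
    have hsub : Icc a z ⊆ Icc a b := Icc_subset_Icc_right hz.2
    rw [intervalIntegral.integral_eq_sub_of_hasDeriv_right_of_le hz.1 (hf.mono hsub)
      (fun s hs => ?_) (hG.intervalIntegrable a z)]
    · ring
    · have hs' : s ∈ Ioo a b := ⟨hs.1, hs.2.trans_le hz.2⟩
      rw [hGg s (Ioo_subset_Icc_self hs')]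
      exact hd s hs'
  have hder : HasDerivAt (fun z => f a + ∫ s in a..z, G s) (G x) x :=
    (intervalIntegral.integral_hasDerivAt_right (hG.intervalIntegrable a x)
      (hG.stronglyMeasurableAtFilter _ _) hG.continuousAt).const_add (f a)
  rw [hGg x hx] at hder
  exact hder.hasDerivWithinAt.congr hFTC (hFTC x hx)

lemma contDiffOn_two_Icc {f g k : ℝ → ℝ} {a b : ℝ} (hab : a < b)
    (hf : ∀ x ∈ Icc a b, HasDerivWithinAt f (g x) (Icc a b) x)
    (hg : ∀ x ∈ Icc a b, HasDerivWithinAt g (k x) (Icc a b) x) (hk : ContinuousOn k (Icc a b)) :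
    ContDiffOn ℝ 2 f (Icc a b) := by
  have hu := uniqueDiffOn_Icc hab
  have h1 : ContDiffOn ℝ 1 g (Icc a b) := by
    rw [show (1 : WithTop ℕ∞) = 0 + 1 from (zero_add 1).symm, contDiffOn_succ_iff_derivWithin hu]
    refine ⟨fun x hx => (hg x hx).differentiableWithinAt, by simp, contDiffOn_zero.2 ?_⟩
    exact hk.congr fun x hx => (hg x hx).derivWithin (hu x hx)
  rw [show (2 : WithTop ℕ∞) = 1 + 1 from one_add_one_eq_two.symm,
    contDiffOn_succ_iff_derivWithin hu]
  refine ⟨fun x hx => (hf x hx).differentiableWithinAt, by simp, ?_⟩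
  exact h1.congr fun x hx => (hf x hx).derivWithin (hu x hx)

lemma le_taylor_two {F F' F'' : ℝ → ℝ} {M : ℝ} (h1 : ∀ x, HasDerivAt F (F' x) x)
    (h2 : ∀ x, HasDerivAt F' (F'' x) x) (hM : ∀ x, |F'' x| ≤ M) (x h : ℝ) :
    |F (x + h) - F x - F' x * h| ≤ M * h ^ 2 / 2 := by
  have key : ∀ (A A' A'' : ℝ → ℝ), (∀ x, HasDerivAt A (A' x) x) → (∀ x, HasDerivAt A' (A'' x) x) →
      (∀ x, |A'' x| ≤ M) → A (x + h) - A x - A' x * h ≤ M * h ^ 2 / 2 := by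
    intro A A' A'' d1 d2 hb
    have hc : ConvexOn ℝ univ fun z => M * z ^ 2 / 2 - A z := by
      refine convexOn_of_hasDerivWithinAt2_nonneg (f' := fun z => M * z - A' z)
        (f'' := fun z => M - A'' z) convex_univ ?_ ?_ ?_ ?_
      · exact Continuous.continuousOn
          ((by fun_prop : Continuous fun z : ℝ => M * z ^ 2 / 2).sub
            (continuous_iff_continuousAt.2 fun z => (d1 z).continuousAt))
      · intro z _
        have := (((hasDerivAt_pow 2 z).const_mul M).div_const 2).sub (d1 z)
        refine HasDerivAt.hasDerivWithinAt (this.congr_deriv ?_)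
        simp; ring
      · intro z _
        have := ((hasDerivAt_id z).const_mul M).sub (d2 z)
        refine HasDerivAt.hasDerivWithinAt (this.congr_deriv ?_)
        simp
      · intro z _
        linarith [(abs_le.1 (hb z)).2]
    have hd : HasDerivAt (fun z => M * z ^ 2 / 2 - A z) (M * x - A' x) x := by
      have := (((hasDerivAt_pow 2 x).const_mul M).div_const 2).sub (d1 x)
      refine this.congr_deriv ?_
      simp; ring
    rcases lt_trichotomy h 0 with hh | hh | hh
    · have := hc.slope_le_of_hasDerivAt (mem_univ (x + h)) (mem_univ x) (by linarith) hd
      rw [slope_def_field, div_le_iff₀ (by linarith)] at this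
      nlinarith
    · simp [hh]
    · have := hc.le_slope_of_hasDerivAt (mem_univ x) (mem_univ (x + h)) (by linarith) hd
      rw [slope_def_field, le_div_iff₀ (by linarith)] at this
      nlinarith
  rw [abs_le]
  constructor
  · have := key (fun z => -F z) (fun z => -F' z) (fun z => -F'' z) (fun z => (h1 z).neg)
      (fun z => (h2 z).neg) (fun z => by rw [abs_neg]; exact hM z)
    linarith
  · exact key F F' F'' h1 h2 hM

lemma abs_heat_sub_self_le {F F' F'' : ℝ → ℝ} {C M δ : ℝ} (h1 : ∀ x, HasDerivAt F (F' x) x)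
    (h2 : ∀ x, HasDerivAt F' (F'' x) x) (hC : ∀ x, |F x| ≤ C) (hM : ∀ x, |F'' x| ≤ M)
    (hδ : 0 ≤ δ) (x : ℝ) : |heat δ F x - F x| ≤ M * δ / 2 := by
  have hF : Measurable F :=
    (continuous_iff_continuousAt.2 fun x => (h1 x).continuousAt).measurable
  have i1 := integrable_heat_integrand hF hC δ x
  have i3 : Integrable (fun w => F' x * (√δ * w)) stdG :=
    (integrable_id_stdG.const_mul (√δ)).const_mul (F' x)
  have e : heat δ F x - F x = ∫ w, (F (x + √δ * w) - F x - F' x * (√δ * w)) ∂stdG := by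
    rw [integral_sub (by exact i1.sub (integrable_const _)) i3,
      integral_sub i1 (integrable_const _),
      integral_const_mul, integral_const_mul, integral_id_stdG]
    simp [heat]
  have i4 : Integrable (fun w : ℝ => M * δ / 2 * w ^ 2) stdG :=
    (integrable_pow_stdG 2).const_mul _
  rw [e, ← Real.norm_eq_abs]
  refine (norm_integral_le_of_norm_le i4 (Eventually.of_forall fun w => ?_)).trans ?_
  · refine (le_taylor_two h1 h2 hM x (√δ * w)).trans_eq ?_
    rw [mul_pow, Real.sq_sqrt hδ]; ring
  · rw [integral_const_mul, integral_sq_stdG, mul_one]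

lemma abs_heat_add_sub_heat_le {F F' F'' : ℝ → ℝ} {C M s δ : ℝ}
    (h1 : ∀ x, HasDerivAt F (F' x) x) (h2 : ∀ x, HasDerivAt F' (F'' x) x) (hC : ∀ x, |F x| ≤ C)
    (hM : ∀ x, |F'' x| ≤ M) (hs : 0 ≤ s) (hδ : 0 ≤ δ) (x : ℝ) :
    |heat (s + δ) F x - heat s F x| ≤ M * δ / 2 := by
  have hF : Measurable F :=
    (continuous_iff_continuousAt.2 fun x => (h1 x).continuousAt).measurable
  have hm : Measurable (heat δ F) := measurable_heat_right hF δ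
  rw [← heat_heat hs hδ hF hC, heat, ← integral_sub
    (integrable_of_bounded (by fun_prop) fun w => abs_heat_le hF hC _ _)
    (integrable_heat_integrand hF hC _ _), ← Real.norm_eq_abs]
  refine (norm_integral_le_of_norm_le (integrable_const (M * δ / 2)) (Eventually.of_forall
    fun w => abs_heat_sub_self_le h1 h2 hC hM hδ _)).trans ?_
  simp

end RightDerivative

section LogBounds

open Set Filter Topology

/-- A normalized family of densities with logarithmic derivatives controlled by `R₁` and `R₂` and
logarithm controlled by `Λ`. -/
structure LogBounds {Y : Type*} [MeasurableSpace Y] (μ : Measure Y) (p p1 p2 : Y → ℝ → ℝ)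
    (D R₁ R₂ Λ : Y → ℝ) (C M : ℝ) : Prop extends DensityFamily μ p p1 p2 D where
  measR₁ : Measurable R₁
  measR₂ : Measurable R₂
  measΛ : Measurable Λ
  R₁_le : ∀ y, |R₁ y| ≤ D y
  R₂_le : ∀ y, |R₂ y| ≤ D y
  Λ_le : ∀ y, |Λ y| ≤ D y
  abs1_le_mul : ∀ y x, |p1 y x| ≤ R₁ y * p y x
  abs2_le_mul : ∀ y x, |p2 y x| ≤ R₂ y * p y x
  exp_neg_le : ∀ y x, exp (-Λ y) ≤ p y x
  le_exp : ∀ y x, p y x ≤ exp (Λ y)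
  mass : ∀ x, ∫ y, p y x ∂μ = 1
  fisher_le : ∀ x, ∫ y, R₁ y ^ 2 * p y x ∂μ ≤ C
  curvature_le : ∀ x, ∫ y, Λ y * R₂ y * p y x ∂μ ≤ M

variable {Y : Type*} [MeasurableSpace Y] {μ : Measure Y} [IsProbabilityMeasure μ]
  {p p1 p2 : Y → ℝ → ℝ} {D R₁ R₂ Λ : Y → ℝ} {C M : ℝ}

/-- `∫ G_t p log G_t p`, averaged over a centred Gaussian of variance `q`. -/
def negEntropy (μ : Measure Y) (p p1 : Y → ℝ → ℝ) (q t : ℝ) : ℝ :=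
  energy μ p p1 (fun M _ => M * log M) q t

/-- Half the Fisher information of `G_t p`, averaged over a centred Gaussian of variance `q`. -/
def fisher (μ : Measure Y) (p p1 : Y → ℝ → ℝ) (q t : ℝ) : ℝ :=
  energy μ p p1 (fun M N => N ^ 2 / (2 * M)) q t

namespace DensityFamily

omit [IsProbabilityMeasure μ] in
lemma integrable_mul (h : DensityFamily μ p p1 p2 D) {F : Y → ℝ → ℝ}
    (hF : Measurable fun z : Y × ℝ => F z.1 z.2) (hb : ∀ y x, |F y x| ≤ D y) {K : Y → ℝ} {n : ℕ}
    (hK : Measurable K) (hKb : ∀ y, |K y| ≤ D y ^ n) (x : ℝ) :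
    Integrable (fun y => K y * F y x) μ := by
  refine integrable_of_measurable_of_abs_le (h.int_pow (n + 1))
    (hK.mul (hF.comp (by fun_prop : Measurable fun y : Y => (y, x)))) fun y => ?_
  rw [abs_mul, pow_succ]
  have := h.pos y
  exact mul_le_mul (hKb y) (hb y x) (abs_nonneg _) (by positivity)

lemma heat_integral (h : DensityFamily μ p p1 p2 D) {F : Y → ℝ → ℝ}
    (hF : Measurable fun z : Y × ℝ => F z.1 z.2) (hb : ∀ y x, |F y x| ≤ D y) {K : Y → ℝ} {n : ℕ}
    (hK : Measurable K) (hKb : ∀ y, |K y| ≤ D y ^ n) (t x : ℝ) :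
    heat t (fun x => ∫ y, K y * F y x ∂μ) x = ∫ y, K y * heat t (F y) x ∂μ := by
  have hi : Integrable (fun z : Y × ℝ => K z.1 * F z.1 (x + √t * z.2)) (μ.prod stdG) := by
    refine integrable_of_measurable_of_abs_le ((h.int_pow (n + 1)).comp_fst stdG)
      ((hK.comp measurable_fst).mul (hF.comp
        (by fun_prop : Measurable fun z : Y × ℝ => (z.1, x + √t * z.2)))) fun z => ?_
    rw [abs_mul, pow_succ]
    have := h.pos z.1
    exact mul_le_mul (hKb _) (hb _ _) (abs_nonneg _) (by positivity)
  unfold heat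
  rw [← integral_integral_swap (by exact hi)]
  simp_rw [integral_const_mul]

omit [IsProbabilityMeasure μ] in
lemma hasDerivAt_integral_mul (h : DensityFamily μ p p1 p2 D) {F F' : Y → ℝ → ℝ}
    (hF : Measurable fun z : Y × ℝ => F z.1 z.2) (hb : ∀ y x, |F y x| ≤ D y)
    (hF' : Measurable fun z : Y × ℝ => F' z.1 z.2) (hb' : ∀ y x, |F' y x| ≤ D y)
    (hd : ∀ y x, HasDerivAt (F y) (F' y x) x) {K : Y → ℝ} {n : ℕ}
    (hK : Measurable K) (hKb : ∀ y, |K y| ≤ D y ^ n) (x : ℝ) :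
    HasDerivAt (fun x => ∫ y, K y * F y x ∂μ) (∫ y, K y * F' y x ∂μ) x := by
  refine (hasDerivAt_integral_of_dominated_loc_of_deriv_le (F := fun x y => K y * F y x)
    (F' := fun x y => K y * F' y x) (bound := fun y => D y ^ (n + 1)) univ_mem
    (Eventually.of_forall fun x => (h.integrable_mul hF hb hK hKb x).aestronglyMeasurable)
    (h.integrable_mul hF hb hK hKb x) (h.integrable_mul hF' hb' hK hKb x).aestronglyMeasurable
    (Eventually.of_forall fun y x _ => ?_) (h.int_pow (n + 1))
    (Eventually.of_forall fun y x _ => (hd y x).const_mul (K y))).2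
  rw [norm_mul, pow_succ]
  have := h.pos y
  exact mul_le_mul (hKb y) (hb' y x) (abs_nonneg _) (by positivity)

lemma negEntropy_hasDerivWithinAt (h : DensityFamily μ p p1 p2 D) {ρ q : ℝ} (hq : q ∈ Icc 0 ρ) :
    HasDerivWithinAt (fun q => negEntropy μ p p1 q (ρ - q)) (fisher μ p p1 q (ρ - q))
      (Icc 0 ρ) q :=
  hasDerivWithinAt_Icc_of_right (g := fun q => fisher μ p p1 q (ρ - q))
    (continuousOn_energy h integrand_mul_log ρ)
    (continuousOn_energy h integrand_sq_div ρ)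
    (fun _ hx => hasDerivWithinAt_energy h integrand_mul_log hx.1.le hx.2) hq

lemma fisher_hasDerivWithinAt (h : DensityFamily μ p p1 p2 D) {ρ q : ℝ} (hq : q ∈ Icc 0 ρ) :
    HasDerivWithinAt (fun q => fisher μ p p1 q (ρ - q))
      (∫ v, ∫ y, curv (heat (ρ - q) (p y) (√q * v)) (heat (ρ - q) (p1 y) (√q * v))
        (heat (ρ - q) (p2 y) (√q * v)) ∂μ ∂stdG) (Icc 0 ρ) q :=
  hasDerivWithinAt_Icc_of_right
    (g := fun q => ∫ v, ∫ y, curv (heat (ρ - q) (p y) (√q * v)) (heat (ρ - q) (p1 y) (√q * v))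
        (heat (ρ - q) (p2 y) (√q * v)) ∂μ ∂stdG)
    (continuousOn_energy h integrand_sq_div ρ) (h.continuousOn_curvature ρ)
    (fun _ hx => hasDerivWithinAt_energy h integrand_sq_div hx.1.le hx.2) hq

omit [IsProbabilityMeasure μ] in
lemma fisher_nonneg (h : DensityFamily μ p p1 p2 D) (q t : ℝ) : 0 ≤ fisher μ p p1 q t :=
  integral_nonneg fun v => integral_nonneg fun y => by
    have := h.heat_pos t y (√q * v)
    simp only [Pi.zero_apply]
    positivity

lemma contDiffOn_negEntropy (h : DensityFamily μ p p1 p2 D) {ρ : ℝ} (hρ : 0 < ρ) :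
    ContDiffOn ℝ 2 (fun q => negEntropy μ p p1 q (ρ - q)) (Icc 0 ρ) :=
  contDiffOn_two_Icc hρ (fun _ hx => h.negEntropy_hasDerivWithinAt hx)
    (fun _ hx => h.fisher_hasDerivWithinAt hx) (h.continuousOn_curvature ρ)

lemma convexOn_negEntropy (h : DensityFamily μ p p1 p2 D) (ρ : ℝ) :
    ConvexOn ℝ (Icc 0 ρ) (fun q => negEntropy μ p p1 q (ρ - q)) := by
  refine convexOn_of_hasDerivWithinAt2_nonneg (convex_Icc 0 ρ)
    (continuousOn_energy h integrand_mul_log ρ)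
    (fun x hx => (h.negEntropy_hasDerivWithinAt (interior_subset hx)).mono interior_subset)
    (fun x hx => (h.fisher_hasDerivWithinAt (interior_subset hx)).mono interior_subset) ?_
  exact fun x _ => integral_nonneg fun v => integral_nonneg fun y =>
    curv_nonneg (h.heat_pos _ _ _) _ _

lemma monotoneOn_negEntropy (h : DensityFamily μ p p1 p2 D) (ρ : ℝ) :
    MonotoneOn (fun q => negEntropy μ p p1 q (ρ - q)) (Icc 0 ρ) :=
  monotoneOn_of_hasDerivWithinAt_nonneg (convex_Icc 0 ρ)
    (continuousOn_energy h integrand_mul_log ρ)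
    (fun _ hx => (h.negEntropy_hasDerivWithinAt (interior_subset hx)).mono interior_subset)
    (fun _ _ => h.fisher_nonneg _ _)

end DensityFamily

namespace LogBounds

omit [IsProbabilityMeasure μ] in
lemma abs_heat_le_mul (h : LogBounds μ p p1 p2 D R₁ R₂ Λ C M) (t x : ℝ) (y : Y) :
    |heat t (p1 y) x| ≤ R₁ y * heat t (p y) x := by
  have hm := h.meas_right y
  rw [heat, heat, ← integral_const_mul, ← Real.norm_eq_abs]
  exact norm_integral_le_of_norm_le ((integrable_heat_integrand hm (h.abs_le y) t x).const_mul _)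
    (Eventually.of_forall fun w => h.abs1_le_mul y _)

omit [IsProbabilityMeasure μ] in
lemma abs_R₁_sq_le (h : LogBounds μ p p1 p2 D R₁ R₂ Λ C M) (y : Y) : |R₁ y ^ 2| ≤ D y ^ 2 := by
  rw [abs_pow]; exact pow_le_pow_left₀ (abs_nonneg _) (h.R₁_le y) 2

lemma fisher_le_half (h : LogBounds μ p p1 p2 D R₁ R₂ Λ C M) (q t : ℝ) :
    fisher μ p p1 q t ≤ C / 2 := by
  have hfd := h.toDensityFamily
  have hR := h.measR₁.pow_const 2
  have hdens : ∀ x, density μ p p1 (fun M N => N ^ 2 / (2 * M)) t x ≤ C / 2 := by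
    intro x
    have hi : Integrable (fun y => R₁ y ^ 2 * heat t (p y) x) μ :=
      hfd.integrable_mul (F := fun y x => heat t (p y) x) (measurable_heat h.meas t)
        (fun y x => abs_heat_le (h.meas_right y) (h.abs_le y) t x) hR h.abs_R₁_sq_le x
    have hle : density μ p p1 (fun M N => N ^ 2 / (2 * M)) t x
        ≤ ∫ y, R₁ y ^ 2 * heat t (p y) x / 2 ∂μ := by
      refine integral_mono_of_nonneg (Eventually.of_forall fun y => ?_) (hi.div_const 2)
        (Eventually.of_forall fun y => ?_)
      · have := hfd.heat_pos t y x
        simp only [Pi.zero_apply]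
        positivity
      · have hu := hfd.heat_pos t y x
        have := h.abs_heat_le_mul t x y
        have h2 := sq_le_sq' (by linarith [abs_nonneg (heat t (p1 y) x)]) this
        simp only
        rw [div_le_div_iff₀ (by positivity) two_pos, ← sq_abs]
        nlinarith
    refine hle.trans ?_
    rw [integral_div, ← hfd.heat_integral h.meas hfd.abs_le hR h.abs_R₁_sq_le]
    refine div_le_div_of_nonneg_right ?_ two_pos.le
    have hmeas : Measurable fun x => ∫ y, R₁ y ^ 2 * p y x ∂μ := by
      have : StronglyMeasurable fun z : Y × ℝ => R₁ z.1 ^ 2 * p z.1 z.2 :=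
        ((hR.comp measurable_fst).mul h.meas).stronglyMeasurable
      exact this.integral_prod_left'.measurable
    refine GLM.heat_le hmeas (C := C) (fun x => ?_) h.fisher_le t x
    rw [abs_of_nonneg (integral_nonneg fun y => by have := hfd.p_pos y x; positivity)]
    exact h.fisher_le x
  refine (integral_mono_of_nonneg (Eventually.of_forall fun v => integral_nonneg fun y => ?_)
    (integrable_const (C / 2)) (Eventually.of_forall fun v => hdens _)).trans (by simp)
  have := hfd.heat_pos t y (√q * v)
  simp only [Pi.zero_apply]
  positivity

lemma abs_negEntropy_sub_le (h : LogBounds μ p p1 p2 D R₁ R₂ Λ C M) {ρ a b : ℝ}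
    (ha : a ∈ Icc 0 ρ) (hb : b ∈ Icc 0 ρ) :
    |negEntropy μ p p1 a (ρ - a) - negEntropy μ p p1 b (ρ - b)| ≤ C / 2 * |a - b| := by
  have := Convex.norm_image_sub_le_of_norm_hasDerivWithin_le
    (fun x hx => h.toDensityFamily.negEntropy_hasDerivWithinAt hx) (C := C / 2)
    (fun x _ => by
      rw [Real.norm_eq_abs, abs_of_nonneg (h.toDensityFamily.fisher_nonneg _ _)]
      exact h.fisher_le_half _ _) (convex_Icc 0 ρ) hb ha
  exact this

omit [IsProbabilityMeasure μ] in
lemma abs_log_heat_le (h : LogBounds μ p p1 p2 D R₁ R₂ Λ C M) (t x : ℝ) (y : Y) :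
    |log (heat t (p y) x)| ≤ Λ y := by
  have hfd := h.toDensityFamily
  have h1 := le_heat (h.meas_right y) (hfd.abs_le y) (h.exp_neg_le y) t x
  have h2 := GLM.heat_le (h.meas_right y) (hfd.abs_le y) (h.le_exp y) t x
  have hpos := hfd.heat_pos t y x
  rw [_root_.abs_le]
  exact ⟨(le_log_iff_exp_le hpos).2 h1, (log_le_iff_le_exp hpos).2 h2⟩

lemma integral_heat_eq_one (h : LogBounds μ p p1 p2 D R₁ R₂ Λ C M) (t x : ℝ) :
    ∫ y, heat t (p y) x ∂μ = 1 := by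
  have := h.toDensityFamily.heat_integral h.meas h.toDensityFamily.abs_le (K := fun _ => 1) (n := 0)
    measurable_const (fun y => by simp) t x
  simp only [one_mul, h.mass] at this
  rw [← this, heat_const]

lemma abs_integral_log_mul_sub_le (h : LogBounds μ p p1 p2 D R₁ R₂ Λ C M) {s δ : ℝ} (hs : 0 ≤ s)
    (hδ : 0 ≤ δ) {ℓ : Y → ℝ} (hℓ : Measurable ℓ) (hℓΛ : ∀ y, |ℓ y| ≤ Λ y) (x : ℝ) :
    |∫ y, ℓ y * heat (s + δ) (p y) x ∂μ - ∫ y, ℓ y * heat s (p y) x ∂μ| ≤ M * δ / 2 := by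
  have hfd := h.toDensityFamily
  have hℓD : ∀ y, |ℓ y| ≤ D y ^ 1 := fun y => by
    rw [pow_one]; exact (hℓΛ y).trans ((le_abs_self _).trans (h.Λ_le y))
  rw [← hfd.heat_integral h.meas hfd.abs_le hℓ hℓD, ← hfd.heat_integral h.meas hfd.abs_le hℓ hℓD]
  refine abs_heat_add_sub_heat_le (C := ∫ y, D y ^ 2 ∂μ)
    (hfd.hasDerivAt_integral_mul h.meas hfd.abs_le h.meas1 h.abs1_le h.deriv1 hℓ hℓD)
    (hfd.hasDerivAt_integral_mul h.meas1 h.abs1_le h.meas2 h.abs2_le h.deriv2 hℓ hℓD)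
    (fun x => ?_) (fun x => ?_) hs hδ x
  · rw [← Real.norm_eq_abs]
    refine norm_integral_le_of_norm_le (h.int_pow 2) (Eventually.of_forall fun y => ?_)
    rw [norm_mul, pow_two]
    have := hfd.pos y
    exact mul_le_mul (by simpa using hℓD y) (hfd.abs_le y x) (abs_nonneg _) (by positivity)
  · rw [← Real.norm_eq_abs]
    refine (norm_integral_le_of_norm_le (g := fun y => Λ y * R₂ y * p y x) ?_
      (Eventually.of_forall fun y => ?_)).trans (h.curvature_le x)
    · refine hfd.integrable_mul h.meas hfd.abs_le (K := fun y => Λ y * R₂ y) (n := 2)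
        (h.measΛ.mul h.measR₂) (fun y => ?_) x
      rw [abs_mul, pow_two]
      exact mul_le_mul (h.Λ_le y) (h.R₂_le y) (abs_nonneg _) (hfd.pos y).le
    · rw [norm_mul, mul_assoc]
      exact mul_le_mul (hℓΛ y) (h.abs2_le_mul y x) (abs_nonneg _)
        ((abs_nonneg _).trans (hℓΛ y))

lemma abs_density_sub_le (h : LogBounds μ p p1 p2 D R₁ R₂ Λ C M) {s δ : ℝ} (hs : 0 ≤ s)
    (hδ : 0 ≤ δ) (x : ℝ) :
    |density μ p p1 (fun M _ => M * log M) (s + δ) x - density μ p p1 (fun M _ => M * log M) s x|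
      ≤ M * δ / 2 := by
  have hfd := h.toDensityFamily
  have hmu : ∀ t, Measurable fun y => heat t (p y) x := fun t =>
    (measurable_heat h.meas t).comp (by fun_prop : Measurable fun y : Y => (y, x))
  have hml : ∀ t, Measurable fun y => log (heat t (p y) x) := fun t =>
    Real.measurable_log.comp (hmu t)
  have hlΛ := fun t y => h.abs_log_heat_le t x y
  have hlD : ∀ t y, |log (heat t (p y) x)| ≤ D y ^ 1 := fun t y => by
    rw [pow_one]; exact (hlΛ t y).trans ((le_abs_self _).trans (h.Λ_le y))
  have hi : ∀ t r, Integrable (fun y => log (heat t (p y) x) * heat r (p y) x) μ := fun t r =>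
    hfd.integrable_mul (F := fun y x => heat r (p y) x) (measurable_heat h.meas r)
      (fun y x => abs_heat_le (h.meas_right y) (hfd.abs_le y) r x) (hml t) (hlD t) x
  have hu : ∀ r, Integrable (fun y => heat r (p y) x) μ := fun r => by
    simpa using hfd.integrable_mul (F := fun y x => heat r (p y) x) (measurable_heat h.meas r)
      (fun y x => abs_heat_le (h.meas_right y) (hfd.abs_le y) r x) (K := fun _ => 1) (n := 0)
      measurable_const (fun y => by simp) x
  have hgibbs : ∀ t r, ∫ y, log (heat t (p y) x) * heat r (p y) x ∂μ
      ≤ ∫ y, log (heat r (p y) x) * heat r (p y) x ∂μ := by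
    intro t r
    have := integral_nonneg (μ := μ) (f := fun y => heat r (p y) x
      * log (heat r (p y) x / heat t (p y) x) - (heat r (p y) x - heat t (p y) x))
      fun y => remainder_mul_log_nonneg (hfd.heat_pos t y x) (hfd.heat_pos r y x)
    have e : (fun y => heat r (p y) x * log (heat r (p y) x / heat t (p y) x)
        - (heat r (p y) x - heat t (p y) x)) = fun y => (log (heat r (p y) x) * heat r (p y) x
        - log (heat t (p y) x) * heat r (p y) x) - (heat r (p y) x - heat t (p y) x) := by
      funext y
      rw [log_div (hfd.heat_pos r y x).ne' (hfd.heat_pos t y x).ne']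
      ring
    rw [e, integral_sub (by exact (hi r r).sub (hi t r)) (by exact (hu r).sub (hu t)),
      integral_sub (hi r r) (hi t r), integral_sub (hu r) (hu t), h.integral_heat_eq_one,
      h.integral_heat_eq_one] at this
    linarith
  have e : ∀ t, density μ p p1 (fun M _ => M * log M) t x
      = ∫ y, log (heat t (p y) x) * heat t (p y) x ∂μ := fun t => by
    simp only [density, mul_comm]
  rw [e, e]
  have h1 := h.abs_integral_log_mul_sub_le hs hδ (hml s) (hlΛ s) x
  have h2 := h.abs_integral_log_mul_sub_le hs hδ (hml (s + δ)) (hlΛ (s + δ)) x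
  rw [_root_.abs_le] at h1 h2 ⊢
  constructor
  · linarith [hgibbs s (s + δ)]
  · linarith [hgibbs (s + δ) s]

lemma abs_negEntropy_add_sub_le (h : LogBounds μ p p1 p2 D R₁ R₂ Λ C M) {s δ : ℝ} (hs : 0 ≤ s)
    (hδ : 0 ≤ δ) (q : ℝ) :
    |negEntropy μ p p1 q (s + δ) - negEntropy μ p p1 q s| ≤ M * δ / 2 := by
  have hfd := h.toDensityFamily
  have hi : ∀ t, Integrable (fun v => density μ p p1 (fun M _ => M * log M) t (√q * v)) stdG :=
    fun t => integrable_of_bounded ((GLM.measurable_density hfd integrand_mul_log t).comp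
      (by fun_prop)) fun v => GLM.abs_density_le hfd integrand_mul_log _ _
  rw [negEntropy, negEntropy, energy, energy, ← integral_sub (hi _) (hi _), ← Real.norm_eq_abs]
  refine (norm_integral_le_of_norm_le (integrable_const (M * δ / 2)) (Eventually.of_forall
    fun v => h.abs_density_sub_le hs hδ _)).trans ?_
  simp

lemma abs_information_sub_le (h : LogBounds μ p p1 p2 D R₁ R₂ Λ C M) {q a b : ℝ} (hq : 0 ≤ q)
    (ha : q ≤ a) (hab : a ≤ b) :
    |(negEntropy μ p p1 b 0 - negEntropy μ p p1 q (b - q))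
      - (negEntropy μ p p1 a 0 - negEntropy μ p p1 q (a - q))| ≤ (C / 2 + M) * (b - a) := by
  have h1 := h.abs_negEntropy_sub_le (ρ := b) (a := b) (b := a) ⟨by linarith, le_rfl⟩
    ⟨by linarith, hab⟩
  have h2 := h.abs_negEntropy_add_sub_le (s := 0) (δ := b - a) le_rfl (by linarith) a
  have h3 := h.abs_negEntropy_add_sub_le (s := a - q) (δ := b - a) (by linarith) (by linarith) q
  rw [sub_self, abs_of_nonneg (sub_nonneg.2 hab)] at h1
  rw [zero_add] at h2
  rw [show a - q + (b - a) = b - q by ring] at h3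
  rw [_root_.abs_le] at h1 h2 h3 ⊢
  constructor <;> linarith

end LogBounds

end LogBounds

section Likelihood

open Set Filter Topology

lemma measurable_of_hasDerivAt {A : Type*} [MeasurableSpace A] {F F' : ℝ → A → ℝ}
    (hF : Measurable fun z : ℝ × A => F z.1 z.2)
    (hd : ∀ α x, HasDerivAt (fun u => F u α) (F' x α) x) :
    Measurable fun z : ℝ × A => F' z.1 z.2 := by
  have h0 : Tendsto (fun n : ℕ => 1 / ((n : ℝ) + 1)) atTop (𝓝[≠] 0) :=
    tendsto_nhdsWithin_iff.2 ⟨tendsto_one_div_add_atTop_nhds_zero_nat,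
      Eventually.of_forall fun n => Nat.one_div_pos_of_nat.ne'⟩
  refine measurable_of_tendsto_metrizable (f := fun (n : ℕ) (z : ℝ × A) =>
    (1 / ((n : ℝ) + 1))⁻¹ • (F (z.1 + 1 / ((n : ℝ) + 1)) z.2 - F z.1 z.2)) (fun n => ?_)
    (tendsto_pi_nhds.2 fun z => (hd z.2 z.1).tendsto_slope_zero.comp h0)
  simp_rw [smul_eq_mul]
  exact ((hF.comp (by fun_prop : Measurable fun z : ℝ × A =>
    (z.1 + 1 / ((n : ℝ) + 1), z.2))).sub hF).const_mul _

lemma hasDerivAt_integral_of_bounded {A : Type*} [MeasurableSpace A] {P : Measure A}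
    [IsFiniteMeasure P] {F F' : ℝ → A → ℝ} {K K' : ℝ} (hF : ∀ x, Measurable (F x))
    (hF' : ∀ x, Measurable (F' x)) (hb : ∀ x α, |F x α| ≤ K) (hb' : ∀ x α, |F' x α| ≤ K')
    (hd : ∀ α x, HasDerivAt (fun u => F u α) (F' x α) x) (x : ℝ) :
    HasDerivAt (fun u => ∫ α, F u α ∂P) (∫ α, F' x α ∂P) x :=
  (hasDerivAt_integral_of_dominated_loc_of_deriv_le univ_mem
    (Eventually.of_forall fun u => (hF u).aestronglyMeasurable)
    (integrable_of_bounded (hF x) (hb x)) (hF' x).aestronglyMeasurable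
    (Eventually.of_forall fun α u _ => hb' u α) (integrable_const K')
    (Eventually.of_forall fun α u _ => hd α u)).2

lemma integral_add_left_stdG (F : ℝ → ℝ) (m : ℝ) :
    ∫ z, F (m + z) ∂stdG = ∫ y, F y * exp (y * m - m ^ 2 / 2) ∂stdG := by
  have h1 : ∫ z, F (m + z) ∂stdG = ∫ y, F y ∂gaussianReal m 1 := by
    have := gaussianReal_map_const_add (μ := 0) (v := 1) m
    rw [zero_add] at this
    rw [← this, (measurableEmbedding_addLeft m).integral_map, stdG]
  rw [h1, stdG, integral_gaussianReal_eq_integral_smul one_ne_zero,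
    integral_gaussianReal_eq_integral_smul one_ne_zero]
  refine integral_congr_ae (Eventually.of_forall fun y => ?_)
  simp only [gaussianPDFReal_def, smul_eq_mul]
  have : exp (-(y - m) ^ 2 / (2 * (1 : NNReal)))
      = exp (-(y - 0) ^ 2 / (2 * (1 : NNReal))) * exp (y * m - m ^ 2 / 2) := by
    rw [← exp_add]; congr 1; push_cast; ring
  rw [this]; ring

lemma integrable_exp_mul_abs_stdG (s : ℝ) : Integrable (fun y => exp (s * |y|)) stdG :=
  integrable_exp_mul_abs (integrable_exp_mul_gaussianReal s) (integrable_exp_mul_gaussianReal (-s))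

/-- A bounded measurable function `f x α`, with bounded first and second derivatives in `x`. -/
structure BoundedLink {A : Type*} [MeasurableSpace A] (f f1 f2 : ℝ → A → ℝ) (a b c : ℝ) :
    Prop where
  meas : Measurable fun z : ℝ × A => f z.1 z.2
  abs_le : ∀ x α, |f x α| ≤ a
  abs1_le : ∀ x α, |f1 x α| ≤ b
  abs2_le : ∀ x α, |f2 x α| ≤ c
  deriv1 : ∀ α x, HasDerivAt (fun u => f u α) (f1 x α) x
  deriv2 : ∀ α x, HasDerivAt (fun u => f1 u α) (f2 x α) x
  nonneg : 0 ≤ a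
  nonneg1 : 0 ≤ b
  nonneg2 : 0 ≤ c

/-- Density of `N(m, 1)` with respect to `N(0, 1)`. -/
def tilt (y m : ℝ) : ℝ := exp (y * m - m ^ 2 / 2)

/-- Density, with respect to `N(0, 1)`, of the output of the channel with input `x`. -/
def likelihood {A : Type*} [MeasurableSpace A] (P : Measure A) (f : ℝ → A → ℝ) (y x : ℝ) : ℝ :=
  ∫ α, tilt y (f x α) ∂P

/-- First derivative of `likelihood` in the input. -/
def likelihood1 {A : Type*} [MeasurableSpace A] (P : Measure A) (f f1 : ℝ → A → ℝ)
    (y x : ℝ) : ℝ :=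
  ∫ α, (y - f x α) * f1 x α * tilt y (f x α) ∂P

/-- Second derivative of `likelihood` in the input. -/
def likelihood2 {A : Type*} [MeasurableSpace A] (P : Measure A) (f f1 f2 : ℝ → A → ℝ)
    (y x : ℝ) : ℝ :=
  ∫ α, ((y - f x α) * f2 x α + ((y - f x α) ^ 2 - 1) * f1 x α ^ 2) * tilt y (f x α) ∂P

/-- Bound for the first logarithmic derivative of the likelihood. -/
def scoreBound (a b y : ℝ) : ℝ := (|y| + a) * b

/-- Bound for the second derivative of the likelihood, relative to the likelihood. -/
def hessBound (a b c y : ℝ) : ℝ := (|y| + a) * c + ((|y| + a) ^ 2 + 1) * b ^ 2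

/-- Bound for the logarithm of the likelihood. -/
def logBound (a y : ℝ) : ℝ := a * |y| + a ^ 2 / 2

/-- A weight dominating the likelihood, its derivatives, and the bounds above. -/
def weight (a b c y : ℝ) : ℝ :=
  (1 + scoreBound a b y + hessBound a b c y + logBound a y) * exp (logBound a y)

variable {A : Type*} [MeasurableSpace A] {f f1 f2 : ℝ → A → ℝ} {a b c : ℝ}

lemma tilt_pos (y m : ℝ) : 0 < tilt y m := exp_pos _

lemma measurable_tilt : Measurable fun z : ℝ × ℝ => tilt z.1 z.2 := by
  unfold tilt; fun_prop

lemma tilt_le {y m : ℝ} (hm : |m| ≤ a) : tilt y m ≤ exp (logBound a y) := by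
  rw [tilt, exp_le_exp, logBound]
  have h1 : y * m ≤ a * |y| := by
    calc y * m ≤ |y| * |m| := by rw [← abs_mul]; exact le_abs_self _
      _ ≤ a * |y| := by rw [mul_comm]; gcongr
  nlinarith [sq_nonneg m, sq_nonneg a]

lemma exp_neg_le_tilt {y m : ℝ} (hm : |m| ≤ a) : exp (-logBound a y) ≤ tilt y m := by
  rw [tilt, exp_le_exp, logBound]
  have h1 : -(y * m) ≤ a * |y| := by
    calc -(y * m) ≤ |y| * |m| := by rw [← abs_mul]; exact neg_le_abs _
      _ ≤ a * |y| := by rw [mul_comm]; gcongr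
  nlinarith [sq_le_sq' (abs_le.1 hm).1 (abs_le.1 hm).2]

lemma hasDerivAt_tilt {g : ℝ → ℝ} {g' x : ℝ} (hg : HasDerivAt g g' x) (y : ℝ) :
    HasDerivAt (fun u => tilt y (g u)) ((y - g x) * g' * tilt y (g x)) x := by
  have := ((hg.const_mul y).fun_sub ((hg.fun_pow 2).div_const 2)).exp
  refine this.congr_deriv ?_
  rw [tilt]
  push_cast
  ring

lemma hasDerivAt_tilt1 {g g1 : ℝ → ℝ} {g2 x : ℝ} (hg : HasDerivAt g (g1 x) x)
    (hg1 : HasDerivAt g1 g2 x) (y : ℝ) :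
    HasDerivAt (fun u => (y - g u) * g1 u * tilt y (g u))
      (((y - g x) * g2 + ((y - g x) ^ 2 - 1) * g1 x ^ 2) * tilt y (g x)) x := by
  have := ((hg.const_sub y).fun_mul hg1).fun_mul (hasDerivAt_tilt hg y)
  refine this.congr_deriv ?_
  ring

lemma measurable_logBound : Measurable (logBound a) := by unfold logBound; fun_prop

lemma measurable_scoreBound : Measurable (scoreBound a b) := by unfold scoreBound; fun_prop

lemma measurable_hessBound : Measurable (hessBound a b c) := by unfold hessBound; fun_prop

lemma measurable_weight : Measurable (weight a b c) := by
  unfold weight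
  exact ((((measurable_const.add measurable_scoreBound).add measurable_hessBound).add
    measurable_logBound).mul measurable_logBound.exp)

lemma logBound_nonneg (ha : 0 ≤ a) (y : ℝ) : 0 ≤ logBound a y := by unfold logBound; positivity

lemma scoreBound_nonneg (ha : 0 ≤ a) (hb : 0 ≤ b) (y : ℝ) : 0 ≤ scoreBound a b y := by
  unfold scoreBound; positivity

lemma hessBound_nonneg (ha : 0 ≤ a) (hc : 0 ≤ c) (y : ℝ) : 0 ≤ hessBound a b c y := by
  unfold hessBound; positivity

lemma weight_le (ha : 0 ≤ a) (hb : 0 ≤ b) (hc : 0 ≤ c) (y : ℝ) :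
    weight a b c y ≤ (1 + (1 + a) * b + ((1 + a) * c + ((1 + a) ^ 2 + 1) * b ^ 2) + (a + a ^ 2 / 2))
      * exp (a ^ 2 / 2) * exp ((a + 2) * |y|) := by
  have hy := abs_nonneg y
  have h1 : 1 ≤ exp |y| := one_le_exp hy
  have h2 : |y| ≤ exp |y| := by linarith [add_one_le_exp |y|]
  have e1 : exp |y| ≤ exp |y| ^ 2 := by nlinarith
  have e0 : 1 ≤ exp |y| ^ 2 := h1.trans e1
  have e2 : |y| ^ 2 ≤ exp |y| ^ 2 := by gcongr
  have h3 : |y| ≤ exp |y| ^ 2 := h2.trans e1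
  have h4 : |y| + a ≤ (1 + a) * exp |y| := by nlinarith
  have h5 : (|y| + a) ^ 2 ≤ (1 + a) ^ 2 * exp |y| ^ 2 := by
    rw [← mul_pow]; gcongr
  have h6 : |y| + a ≤ (1 + a) * exp |y| ^ 2 := h4.trans (by gcongr)
  have key : 1 + scoreBound a b y + hessBound a b c y + logBound a y
      ≤ (1 + (1 + a) * b + ((1 + a) * c + ((1 + a) ^ 2 + 1) * b ^ 2) + (a + a ^ 2 / 2))
        * exp |y| ^ 2 := by
    unfold scoreBound hessBound logBound
    have i1 := mul_le_mul_of_nonneg_right h6 hb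
    have i2 := mul_le_mul_of_nonneg_right h6 hc
    have i3 : ((|y| + a) ^ 2 + 1) * b ^ 2 ≤ ((1 + a) ^ 2 * exp |y| ^ 2 + exp |y| ^ 2) * b ^ 2 := by
      gcongr
    have i4 := mul_le_mul_of_nonneg_left h3 ha
    have i5 : a ^ 2 / 2 ≤ a ^ 2 / 2 * exp |y| ^ 2 := le_mul_of_one_le_right (by positivity) e0
    linarith
  have e : exp ((a + 2) * |y|) = exp |y| ^ 2 * exp (a * |y|) := by
    rw [← exp_nat_mul, ← exp_add]; congr 1; push_cast; ring
  have e' : exp (logBound a y) = exp (a ^ 2 / 2) * exp (a * |y|) := by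
    rw [← exp_add, logBound, add_comm]
  rw [weight, e, e']
  calc _ ≤ _ * (exp (a ^ 2 / 2) * exp (a * |y|)) := mul_le_mul_of_nonneg_right key (by positivity)
    _ = _ := by ring

lemma le_weight (y : ℝ) {K : ℝ}
    (hK : K ≤ 1 + scoreBound a b y + hessBound a b c y + logBound a y) :
    K * exp (logBound a y) ≤ weight a b c y := mul_le_mul_of_nonneg_right hK (exp_pos _).le

lemma le_weight' (ha : 0 ≤ a) (hb : 0 ≤ b) (hc : 0 ≤ c) (y : ℝ) {K : ℝ}
    (hK : K ≤ 1 + scoreBound a b y + hessBound a b c y + logBound a y) :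
    K ≤ weight a b c y := by
  refine hK.trans (le_mul_of_one_le_right ?_ (one_le_exp (logBound_nonneg ha y)))
  have h1 := scoreBound_nonneg ha hb y
  have h2 := hessBound_nonneg (b := b) ha hc y
  have h3 := logBound_nonneg ha y
  positivity

lemma integrable_weight_pow (ha : 0 ≤ a) (hb : 0 ≤ b) (hc : 0 ≤ c) (n : ℕ) :
    Integrable (fun y => weight a b c y ^ n) stdG := by
  refine integrable_of_measurable_of_abs_le (((integrable_exp_mul_abs_stdG (n * (a + 2))).const_mul
    (((1 + (1 + a) * b + ((1 + a) * c + ((1 + a) ^ 2 + 1) * b ^ 2) + (a + a ^ 2 / 2))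
      * exp (a ^ 2 / 2)) ^ n))) (measurable_weight.pow_const n) fun y => ?_
  have h0 : 0 ≤ weight a b c y := by
    have h1 := scoreBound_nonneg ha hb y
    have h2 := hessBound_nonneg (b := b) ha hc y
    have h3 := logBound_nonneg ha y
    unfold weight; positivity
  rw [abs_of_nonneg (by positivity), mul_assoc (n : ℝ), exp_nat_mul, ← mul_pow]
  exact pow_le_pow_left₀ h0 (weight_le ha hb hc y) n

namespace BoundedLink

lemma meas1 (h : BoundedLink f f1 f2 a b c) : Measurable fun z : ℝ × A => f1 z.1 z.2 :=
  measurable_of_hasDerivAt h.meas h.deriv1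

lemma meas2 (h : BoundedLink f f1 f2 a b c) : Measurable fun z : ℝ × A => f2 z.1 z.2 :=
  measurable_of_hasDerivAt h.meas1 h.deriv2

lemma abs_sub_le (h : BoundedLink f f1 f2 a b c) (y x : ℝ) (α : A) : |y - f x α| ≤ |y| + a :=
  (abs_sub _ _).trans (by linarith [h.abs_le x α])

lemma abs_score_le (h : BoundedLink f f1 f2 a b c) (y x : ℝ) (α : A) :
    |(y - f x α) * f1 x α * tilt y (f x α)| ≤ scoreBound a b y * tilt y (f x α) := by
  rw [abs_mul, abs_mul, abs_of_pos (tilt_pos _ _)]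
  refine mul_le_mul_of_nonneg_right ?_ (tilt_pos _ _).le
  have := h.nonneg
  exact mul_le_mul (h.abs_sub_le y x α) (h.abs1_le x α) (abs_nonneg _) (by positivity)

lemma abs_hess_le (h : BoundedLink f f1 f2 a b c) (y x : ℝ) (α : A) :
    |((y - f x α) * f2 x α + ((y - f x α) ^ 2 - 1) * f1 x α ^ 2) * tilt y (f x α)|
      ≤ hessBound a b c y * tilt y (f x α) := by
  rw [abs_mul, abs_of_pos (tilt_pos _ _)]
  refine mul_le_mul_of_nonneg_right ?_ (tilt_pos _ _).le
  have ha := h.nonneg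
  have h1 := h.abs_sub_le y x α
  refine (abs_add_le _ _).trans (add_le_add ?_ ?_)
  · rw [abs_mul]
    exact mul_le_mul h1 (h.abs2_le x α) (abs_nonneg _) (by positivity)
  · rw [abs_mul]
    refine mul_le_mul ?_ ?_ (abs_nonneg _) (by positivity)
    · refine (abs_sub _ _).trans ?_
      rw [abs_pow, abs_one]
      gcongr
    · rw [abs_pow]
      exact pow_le_pow_left₀ (abs_nonneg _) (h.abs1_le x α) 2

lemma measurable_tilt_comp (h : BoundedLink f f1 f2 a b c) :
    Measurable fun z : (ℝ × ℝ) × A => tilt z.1.1 (f z.1.2 z.2) := by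
  have hf := h.meas.comp (by fun_prop : Measurable fun z : (ℝ × ℝ) × A => (z.1.2, z.2))
  exact measurable_tilt.comp ((by fun_prop : Measurable fun z : (ℝ × ℝ) × A => z.1.1).prodMk hf)

lemma measurable_score (h : BoundedLink f f1 f2 a b c) : Measurable fun z : (ℝ × ℝ) × A =>
    (z.1.1 - f z.1.2 z.2) * f1 z.1.2 z.2 * tilt z.1.1 (f z.1.2 z.2) := by
  have hm : Measurable fun z : (ℝ × ℝ) × A => (z.1.2, z.2) := by fun_prop
  exact (((by fun_prop : Measurable fun z : (ℝ × ℝ) × A => z.1.1).sub (h.meas.comp hm)).mul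
    (h.meas1.comp hm)).mul h.measurable_tilt_comp

lemma measurable_hess (h : BoundedLink f f1 f2 a b c) : Measurable fun z : (ℝ × ℝ) × A =>
    ((z.1.1 - f z.1.2 z.2) * f2 z.1.2 z.2 + ((z.1.1 - f z.1.2 z.2) ^ 2 - 1) * f1 z.1.2 z.2 ^ 2)
      * tilt z.1.1 (f z.1.2 z.2) := by
  have hm : Measurable fun z : (ℝ × ℝ) × A => (z.1.2, z.2) := by fun_prop
  have hs := (by fun_prop : Measurable fun z : (ℝ × ℝ) × A => z.1.1).sub (h.meas.comp hm)
  exact ((hs.mul (h.meas2.comp hm)).add (((hs.pow_const 2).sub_const 1).mul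
    ((h.meas1.comp hm).pow_const 2))).mul h.measurable_tilt_comp

variable {P : Measure A} [IsProbabilityMeasure P]

lemma integrable_tilt (h : BoundedLink f f1 f2 a b c) (y x : ℝ) :
    Integrable (fun α => tilt y (f x α)) P :=
  integrable_of_bounded (h.measurable_tilt_comp.comp
    (by fun_prop : Measurable fun α : A => ((y, x), α))) fun α => by
      rw [abs_of_pos (tilt_pos _ _)]; exact tilt_le (h.abs_le x α)

lemma likelihood_le (h : BoundedLink f f1 f2 a b c) (y x : ℝ) :
    likelihood P f y x ≤ exp (logBound a y) := by
  refine (integral_mono (h.integrable_tilt y x) (integrable_const _)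
    fun α => tilt_le (h.abs_le x α)).trans ?_
  simp

lemma exp_neg_le_likelihood (h : BoundedLink f f1 f2 a b c) (y x : ℝ) :
    exp (-logBound a y) ≤ likelihood P f y x := by
  refine le_trans ?_ (integral_mono (integrable_const (exp (-logBound a y)))
    (h.integrable_tilt y x) fun α => exp_neg_le_tilt (h.abs_le x α))
  simp

lemma abs_likelihood1_le (h : BoundedLink f f1 f2 a b c) (y x : ℝ) :
    |likelihood1 P f f1 y x| ≤ scoreBound a b y * likelihood P f y x := by
  rw [likelihood, ← integral_const_mul, ← Real.norm_eq_abs]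
  exact norm_integral_le_of_norm_le ((h.integrable_tilt y x).const_mul _)
    (Eventually.of_forall fun α => h.abs_score_le y x α)

lemma abs_likelihood2_le (h : BoundedLink f f1 f2 a b c) (y x : ℝ) :
    |likelihood2 P f f1 f2 y x| ≤ hessBound a b c y * likelihood P f y x := by
  rw [likelihood, ← integral_const_mul, ← Real.norm_eq_abs]
  exact norm_integral_le_of_norm_le ((h.integrable_tilt y x).const_mul _)
    (Eventually.of_forall fun α => h.abs_hess_le y x α)

lemma densityFamily (h : BoundedLink f f1 f2 a b c) :
    DensityFamily stdG (likelihood P f) (likelihood1 P f f1) (likelihood2 P f f1 f2)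
      (weight a b c) := by
  have ha := h.nonneg
  have hb := h.nonneg1
  have hc := h.nonneg2
  have s0 := fun y => scoreBound_nonneg ha hb y
  have s1 := fun y => hessBound_nonneg (b := b) ha hc y
  have s2 := fun y => logBound_nonneg ha y
  have hle := fun y x => h.likelihood_le (P := P) y x
  have hexp : ∀ y, exp (logBound a y) ≤ weight a b c y := fun y => by
    simpa using le_weight y (K := 1) (by linarith [s0 y, s1 y, s2 y])
  have hm : ∀ y x : ℝ, Measurable fun α : A => ((y, x), α) := fun y x => by fun_prop
  refine
    { measD := measurable_weight
      one_le := fun y => le_weight' ha hb hc y (by linarith [s0 y, s1 y, s2 y])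
      int_pow := integrable_weight_pow ha hb hc
      meas := h.measurable_tilt_comp.stronglyMeasurable.integral_prod_right'.measurable
      meas1 := h.measurable_score.stronglyMeasurable.integral_prod_right'.measurable
      meas2 := h.measurable_hess.stronglyMeasurable.integral_prod_right'.measurable
      inv_le := fun y x => ?_
      le := fun y x => (hle y x).trans (hexp y)
      abs1_le := fun y x => ?_
      abs2_le := fun y x => ?_
      deriv1 := fun y x => ?_
      deriv2 := fun y x => ?_ }
  · refine le_trans ?_ (h.exp_neg_le_likelihood y x)
    rw [exp_neg]
    exact inv_anti₀ (exp_pos _) (hexp y)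
  · refine (h.abs_likelihood1_le y x).trans ((mul_le_mul_of_nonneg_left (hle y x) (s0 y)).trans ?_)
    exact le_weight y (by linarith [s0 y, s1 y, s2 y])
  · refine (h.abs_likelihood2_le y x).trans ((mul_le_mul_of_nonneg_left (hle y x) (s1 y)).trans ?_)
    exact le_weight y (by linarith [s0 y, s1 y, s2 y])
  · refine hasDerivAt_integral_of_bounded (F := fun x α => tilt y (f x α))
      (K := exp (logBound a y))
      (K' := scoreBound a b y * exp (logBound a y))
      (fun x => h.measurable_tilt_comp.comp (hm y x)) (fun x => h.measurable_score.comp (hm y x))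
      (fun x α => ?_) (fun x α => ?_) (fun α x => hasDerivAt_tilt (h.deriv1 α x) y) x
    · rw [abs_of_pos (tilt_pos _ _)]
      exact tilt_le (h.abs_le x α)
    · exact (h.abs_score_le y x α).trans
        (mul_le_mul_of_nonneg_left (tilt_le (h.abs_le x α)) (s0 y))
  · refine hasDerivAt_integral_of_bounded
      (F := fun x α => (y - f x α) * f1 x α * tilt y (f x α))
      (K := scoreBound a b y * exp (logBound a y))
      (K' := hessBound a b c y * exp (logBound a y))
      (fun x => h.measurable_score.comp (hm y x)) (fun x => h.measurable_hess.comp (hm y x))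
      (fun x α => ?_) (fun x α => ?_)
      (fun α x => hasDerivAt_tilt1 (h.deriv1 α x) (h.deriv2 α x) y) x
    · exact (h.abs_score_le y x α).trans
        (mul_le_mul_of_nonneg_left (tilt_le (h.abs_le x α)) (s0 y))
    · exact (h.abs_hess_le y x α).trans
        (mul_le_mul_of_nonneg_left (tilt_le (h.abs_le x α)) (s1 y))

lemma integral_mul_likelihood (h : BoundedLink f f1 f2 a b c) {K : ℝ → ℝ} (hK : Measurable K)
    {n : ℕ} (hKb : ∀ y, |K y| ≤ weight a b c y ^ n) (x : ℝ) :
    ∫ y, K y * likelihood P f y x ∂stdG = ∫ α, ∫ z, K (f x α + z) ∂stdG ∂P := by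
  have ha := h.nonneg
  have hb := h.nonneg1
  have hc := h.nonneg2
  have hi : Integrable (Function.uncurry fun (y : ℝ) (α : A) => K y * tilt y (f x α))
      (stdG.prod P) := by
    refine integrable_of_measurable_of_abs_le
      ((integrable_weight_pow ha hb hc (n + 1)).comp_fst P)
      ((hK.comp measurable_fst).mul (h.measurable_tilt_comp.comp
        (by fun_prop : Measurable fun z : ℝ × A => ((z.1, x), z.2)))) fun z => ?_
    rw [Function.uncurry_def, abs_mul, pow_succ, abs_of_pos (tilt_pos _ _)]
    refine mul_le_mul (hKb _) ?_ (tilt_pos _ _).le ((abs_nonneg _).trans (hKb _))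
    refine (tilt_le (h.abs_le x z.2)).trans ?_
    simpa using le_weight z.1 (K := 1) (by
      linarith [scoreBound_nonneg ha hb z.1, hessBound_nonneg (b := b) ha hc z.1,
        logBound_nonneg ha z.1])
  simp_rw [likelihood, ← integral_const_mul]
  rw [integral_integral_swap hi]
  refine integral_congr_ae (Eventually.of_forall fun α => ?_)
  exact (integral_add_left_stdG K (f x α)).symm

end BoundedLink

end Likelihood

section Channel

open Set Filter Topology

lemma integral_cubic_le {k₀ k₁ k₂ k₃ : ℝ} (h₁ : 0 ≤ k₁) (h₃ : 0 ≤ k₃) :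
    ∫ z, (k₀ + k₁ * |z| + k₂ * z ^ 2 + k₃ * |z| ^ 3) ∂stdG ≤ k₀ + k₁ + k₂ + 2 * k₃ := by
  have i1 := integrable_abs_stdG.const_mul k₁
  have i2 := (integrable_pow_stdG 2).const_mul k₂
  have i3 := (integrable_abs_pow_stdG 3).const_mul k₃
  have j1 : Integrable (fun z => k₀ + k₁ * |z|) stdG := (integrable_const _).add i1
  have j2 : Integrable (fun z => k₀ + k₁ * |z| + k₂ * z ^ 2) stdG := j1.add i2
  rw [integral_add j2 i3, integral_add j1 i2, integral_add (integrable_const _) i1,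
    integral_const_mul, integral_const_mul, integral_const_mul, integral_sq_stdG]
  have e1 := mul_le_mul_of_nonneg_left integral_abs_stdG_le h₁
  have e3 := mul_le_mul_of_nonneg_left integral_abs_pow_three_stdG_le h₃
  simp only [integral_const, probReal_univ, one_smul]
  linarith

lemma integrable_cubic (k₀ k₁ k₂ k₃ : ℝ) :
    Integrable (fun z => k₀ + k₁ * |z| + k₂ * z ^ 2 + k₃ * |z| ^ 3) stdG :=
  (((integrable_const _).add (integrable_abs_stdG.const_mul k₁)).add
    ((integrable_pow_stdG 2).const_mul k₂)).add ((integrable_abs_pow_stdG 3).const_mul k₃)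

variable {A : Type*} [MeasurableSpace A] {f f1 f2 : ℝ → A → ℝ} {a b c : ℝ}

lemma integral_le_of_le_cubic {K : ℝ → ℝ} {m k₀ k₁ k₂ k₃ : ℝ} (hK : ∀ y, 0 ≤ K y)
    (hb : ∀ z, K (m + z) ≤ k₀ + k₁ * |z| + k₂ * |z| ^ 2 + k₃ * |z| ^ 3)
    (h₁ : 0 ≤ k₁) (h₃ : 0 ≤ k₃) : ∫ z, K (m + z) ∂stdG ≤ k₀ + k₁ + k₂ + 2 * k₃ :=
  (integral_mono_of_nonneg (Eventually.of_forall fun z => hK _) (integrable_cubic k₀ k₁ k₂ k₃)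
    (Eventually.of_forall fun z => by simpa only [sq_abs] using hb z)).trans
    (integral_cubic_le h₁ h₃)

lemma integral_scoreBound_sq_le (ha : 0 ≤ a) {m : ℝ} (hm : |m| ≤ a) :
    ∫ z, scoreBound a b (m + z) ^ 2 ∂stdG ≤ b ^ 2 * (2 + 8 * a ^ 2) := by
  refine (integral_le_of_le_cubic (K := fun y => scoreBound a b y ^ 2) (k₀ := 4 * a ^ 2 * b ^ 2)
    (k₁ := 4 * a * b ^ 2) (k₂ := b ^ 2) (k₃ := 0) (fun y => sq_nonneg _) (fun z => ?_)
    (by positivity) le_rfl).trans ?_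
  · have h1 : |m + z| ≤ |z| + a := (abs_add_le m z).trans (by linarith)
    have h2 : (|m + z| + a) ^ 2 ≤ (|z| + a + a) ^ 2 := by gcongr
    rw [scoreBound, mul_pow]
    nlinarith [mul_le_mul_of_nonneg_right h2 (sq_nonneg b)]
  · nlinarith [mul_nonneg (sq_nonneg b) (sq_nonneg (2 * a - 1))]

/-- Bound for the mean of `logBound * hessBound` under the output law. -/
def curvatureConst (a b c : ℝ) : ℝ :=
  c * (a + 7 / 2 * a ^ 2 + 3 * a ^ 3) + b ^ 2 * (3 * a + 7 * a ^ 2 + 10 * a ^ 3 + 6 * a ^ 4)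

lemma integral_logBound_mul_hessBound_le (ha : 0 ≤ a) (hc : 0 ≤ c) {m : ℝ} (hm : |m| ≤ a) :
    ∫ z, logBound a (m + z) * hessBound a b c (m + z) ∂stdG ≤ curvatureConst a b c := by
  refine (integral_le_of_le_cubic (K := fun y => logBound a y * hessBound a b c y)
    (k₀ := 3 * a ^ 3 * c + (6 * a ^ 4 + 3 / 2 * a ^ 2) * b ^ 2)
    (k₁ := 7 / 2 * a ^ 2 * c + (10 * a ^ 3 + a) * b ^ 2)
    (k₂ := a * c + 11 / 2 * a ^ 2 * b ^ 2) (k₃ := a * b ^ 2)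
    (fun y => mul_nonneg (logBound_nonneg ha y) (hessBound_nonneg ha hc y)) (fun z => ?_)
    (by positivity) (by positivity)).trans (le_of_eq ?_)
  · have h1 : |m + z| ≤ |z| + a := (abs_add_le m z).trans (by linarith)
    have hΛ : logBound a (m + z) ≤ a * (|z| + a) + a ^ 2 / 2 := by unfold logBound; gcongr
    have hR : hessBound a b c (m + z)
        ≤ (|z| + a + a) * c + ((|z| + a + a) ^ 2 + 1) * b ^ 2 := by
      unfold hessBound; gcongr
    refine (mul_le_mul hΛ hR (hessBound_nonneg ha hc _) (by positivity)).trans (le_of_eq ?_)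
    ring
  · rw [curvatureConst]; ring

namespace BoundedLink

variable {P : Measure A} [IsProbabilityMeasure P]

lemma logBounds (h : BoundedLink f f1 f2 a b c) :
    LogBounds stdG (likelihood P f) (likelihood1 P f f1) (likelihood2 P f f1 f2) (weight a b c)
      (scoreBound a b) (hessBound a b c) (logBound a) (b ^ 2 * (2 + 8 * a ^ 2))
      (curvatureConst a b c) := by
  have ha := h.nonneg
  have hb := h.nonneg1
  have hc := h.nonneg2
  have s0 := fun y => scoreBound_nonneg ha hb y
  have s1 := fun y => hessBound_nonneg (b := b) ha hc y
  have s2 := fun y => logBound_nonneg ha y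
  have w0 : ∀ y, |scoreBound a b y| ≤ weight a b c y := fun y => by
    rw [abs_of_nonneg (s0 y)]; exact le_weight' ha hb hc y (by linarith [s1 y, s2 y])
  have w1 : ∀ y, |hessBound a b c y| ≤ weight a b c y := fun y => by
    rw [abs_of_nonneg (s1 y)]; exact le_weight' ha hb hc y (by linarith [s0 y, s2 y])
  have w2 : ∀ y, |logBound a y| ≤ weight a b c y := fun y => by
    rw [abs_of_nonneg (s2 y)]; exact le_weight' ha hb hc y (by linarith [s0 y, s1 y])
  have hmean : ∀ {g : A → ℝ} {K : ℝ}, (∀ α, 0 ≤ g α) → (∀ α, g α ≤ K) → ∫ α, g α ∂P ≤ K := by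
    intro g K hg hgK
    refine (integral_mono_of_nonneg (Eventually.of_forall hg) (integrable_const K)
      (Eventually.of_forall hgK)).trans ?_
    simp
  refine
    { h.densityFamily with
      measR₁ := measurable_scoreBound
      measR₂ := measurable_hessBound
      measΛ := measurable_logBound
      R₁_le := w0
      R₂_le := w1
      Λ_le := w2
      abs1_le_mul := h.abs_likelihood1_le
      abs2_le_mul := h.abs_likelihood2_le
      exp_neg_le := h.exp_neg_le_likelihood
      le_exp := h.likelihood_le
      mass := fun x => ?_
      fisher_le := fun x => ?_
      curvature_le := fun x => ?_ }
  · simpa using h.integral_mul_likelihood (P := P) (K := fun _ => 1) (n := 0) measurable_const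
      (fun y => by simp) x
  · rw [h.integral_mul_likelihood (K := fun y => scoreBound a b y ^ 2) (n := 2)
      (measurable_scoreBound.pow_const 2) fun y => by
        rw [abs_pow]; exact pow_le_pow_left₀ (abs_nonneg _) (w0 y) 2]
    exact hmean (fun α => integral_nonneg fun z => sq_nonneg _)
      fun α => integral_scoreBound_sq_le ha (h.abs_le x α)
  · rw [h.integral_mul_likelihood (K := fun y => logBound a y * hessBound a b c y) (n := 2)
      (measurable_logBound.mul measurable_hessBound) fun y => by
        rw [abs_mul, pow_two]
        exact mul_le_mul (w2 y) (w1 y) (abs_nonneg _) ((abs_nonneg _).trans (w2 y))]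
    exact hmean (fun α => integral_nonneg fun z => mul_nonneg (s2 _) (s1 _))
      fun α => integral_logBound_mul_hessBound_le ha hc (h.abs_le x α)

end BoundedLink

lemma curvatureConst_le (ha : 0 ≤ a) (hc : 0 ≤ c) :
    b ^ 2 * (2 + 8 * a ^ 2) / 2 + curvatureConst a b c
      ≤ b ^ 2 * (128 * a ^ 4 + 12 * a ^ 2 + 27) + c * (16 * a ^ 3 + 4 * √(2 / π)) := by
  have hs : (7 / 10 : ℝ) ≤ √(2 / π) := by
    refine le_sqrt_of_sq_le ?_
    rw [le_div_iff₀ pi_pos]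
    linarith [pi_lt_four]
  have h1 : a + 7 / 2 * a ^ 2 + 3 * a ^ 3 ≤ 16 * a ^ 3 + 4 * √(2 / π) := by
    have : a + 7 / 2 * a ^ 2 + 3 * a ^ 3 ≤ 16 * a ^ 3 + 28 / 10 := by
      nlinarith [mul_nonneg ha (sq_nonneg (2 * a - 1)), sq_nonneg (2 * a - 1)]
    linarith
  have h2 : 1 + 4 * a ^ 2 + (3 * a + 7 * a ^ 2 + 10 * a ^ 3 + 6 * a ^ 4)
      ≤ 128 * a ^ 4 + 12 * a ^ 2 + 27 := by
    nlinarith [sq_nonneg (a - 1), sq_nonneg (a ^ 2 - a), sq_nonneg (a ^ 2), sq_nonneg (a ^ 2 - 1)]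
  rw [curvatureConst]
  nlinarith [mul_le_mul_of_nonneg_left h1 hc, mul_le_mul_of_nonneg_left h2 (sq_nonneg b)]

end Channel

section Information

open Set Filter Topology

variable {A : Type*} [MeasurableSpace A] {f f1 f2 : ℝ → A → ℝ} {a b c : ℝ}

/-- Mean of `ℓ - y ^ 2 / 2` under the output law of the channel with input `x`. -/
def quadMean (P : Measure A) (f : ℝ → A → ℝ) (ℓ x : ℝ) : ℝ :=
  ∫ y, (ℓ - y ^ 2 / 2) * likelihood P f y x ∂stdG

namespace BoundedLink

variable {P : Measure A} [IsProbabilityMeasure P]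

lemma mono1 {b' : ℝ} (h : BoundedLink f f1 f2 a b c) (hb : b ≤ b') :
    BoundedLink f f1 f2 a b' c :=
  { h with
    abs1_le := fun x α => (h.abs1_le x α).trans hb
    nonneg1 := h.nonneg1.trans hb }

lemma exists_hessBound (h : BoundedLink f f1 f2 a b c) (ℓ : ℝ) :
    ∃ b', BoundedLink f f1 f2 a b' c ∧ ∀ y, |ℓ - y ^ 2 / 2| ≤ hessBound a b' c y := by
  have ha := h.nonneg
  have hb := h.nonneg1
  have hc := h.nonneg2
  have hℓ := abs_nonneg ℓ
  refine ⟨b + 1 + |ℓ|, h.mono1 (by linarith), fun y => ?_⟩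
  have hy := abs_nonneg y
  have h1 : 1 + |ℓ| ≤ (b + 1 + |ℓ|) ^ 2 := by nlinarith
  have h2 : y ^ 2 ≤ (|y| + a) ^ 2 := by rw [← sq_abs y]; gcongr; linarith
  have h3 : |ℓ - y ^ 2 / 2| ≤ |ℓ| + y ^ 2 / 2 := by
    refine (abs_sub _ _).trans ?_
    rw [abs_of_nonneg (by positivity : 0 ≤ y ^ 2 / 2)]
  have h4 : (y ^ 2 + 1) * (1 + |ℓ|) ≤ ((|y| + a) ^ 2 + 1) * (b + 1 + |ℓ|) ^ 2 := by gcongr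
  have h5 : 0 ≤ (|y| + a) * c := by positivity
  rw [hessBound]
  nlinarith [mul_nonneg (sq_nonneg y) hℓ, sq_nonneg y]

lemma abs_le_weight_sq (h : BoundedLink f f1 f2 a b c) {K : ℝ → ℝ}
    (hK : ∀ y, |K y| ≤ hessBound a b c y + logBound a y) (y : ℝ) : |K y| ≤ weight a b c y ^ 1 := by
  rw [pow_one]
  exact (hK y).trans (le_weight' h.nonneg h.nonneg1 h.nonneg2 y
    (by linarith [scoreBound_nonneg h.nonneg h.nonneg1 y]))

lemma abs_log_heat_le (h : BoundedLink f f1 f2 a b c) (t u y : ℝ) :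
    |log (heat t (likelihood P f y) u)| ≤ logBound a y := h.logBounds.abs_log_heat_le t u y

lemma measurable_log_heat (h : BoundedLink f f1 f2 a b c) (t u : ℝ) :
    Measurable fun y => log (heat t (likelihood P f y) u) :=
  ((measurable_heat h.densityFamily.meas t).comp (by fun_prop : Measurable fun y : ℝ => (y, u))).log

lemma integral_log_output (h : BoundedLink f f1 f2 a b c) {ℓ : ℝ}
    (hℓ : ∀ y, |ℓ - y ^ 2 / 2| ≤ hessBound a b c y) (t x u : ℝ) :
    ∫ α, ∫ z, (ℓ - (f x α + z) ^ 2 / 2 + log (heat t (likelihood P f (f x α + z)) u)) ∂stdG ∂P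
      = quadMean P f ℓ x
        + ∫ y, log (heat t (likelihood P f y) u) * likelihood P f y x ∂stdG := by
  have hfd := h.densityFamily (P := P)
  have hm : Measurable fun y : ℝ => ℓ - y ^ 2 / 2 := by fun_prop
  have hl := h.measurable_log_heat (P := P) t u
  have s1 := fun y => hessBound_nonneg (b := b) h.nonneg h.nonneg2 y
  have s2 := fun y => logBound_nonneg h.nonneg y
  have b1 := h.abs_le_weight_sq (K := fun y => ℓ - y ^ 2 / 2)
    fun y => (hℓ y).trans (by linarith [s2 y])
  have b2 := h.abs_le_weight_sq fun y => (h.abs_log_heat_le (P := P) t u y).trans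
    (by linarith [s1 y])
  have b3 := h.abs_le_weight_sq
    (K := fun y => ℓ - y ^ 2 / 2 + log (heat t (likelihood P f y) u))
    fun y => (abs_add_le _ _).trans (add_le_add (hℓ y) (h.abs_log_heat_le t u y))
  refine (h.integral_mul_likelihood (hm.add hl) b3 x).symm.trans ?_
  rw [quadMean, ← integral_add (hfd.integrable_mul hfd.meas hfd.abs_le hm b1 x)
    (hfd.integrable_mul hfd.meas hfd.abs_le hl b2 x)]
  simp_rw [← add_mul]
  rfl

lemma measurable_integral_mul (h : BoundedLink f f1 f2 a b c) {K : ℝ → ℝ} (hK : Measurable K) :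
    Measurable fun x => ∫ y, K y * likelihood P f y x ∂stdG := by
  have : Measurable fun z : ℝ × ℝ => K z.2 * likelihood P f z.2 z.1 :=
    (hK.comp measurable_snd).mul (h.densityFamily.meas.comp measurable_swap)
  exact this.stronglyMeasurable.integral_prod_right'.measurable

lemma abs_integral_mul_le (h : BoundedLink f f1 f2 a b c) {K : ℝ → ℝ}
    (hKb : ∀ y, |K y| ≤ weight a b c y ^ 1) (x : ℝ) :
    |∫ y, K y * likelihood P f y x ∂stdG| ≤ ∫ y, weight a b c y ^ 2 ∂stdG := by
  rw [← Real.norm_eq_abs]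
  refine norm_integral_le_of_norm_le (h.densityFamily (P := P).int_pow 2)
    (Eventually.of_forall fun y => ?_)
  rw [norm_mul, pow_two]
  exact mul_le_mul (by simpa using hKb y) (h.densityFamily.abs_le y x) (abs_nonneg _)
    (h.densityFamily (P := P).pos y).le

lemma integral_output (h : BoundedLink f f1 f2 a b c) {ℓ : ℝ}
    (hℓ : ∀ y, |ℓ - y ^ 2 / 2| ≤ hessBound a b c y) {q t : ℝ} (hq : 0 ≤ q) (ht : 0 ≤ t) :
    ∫ v, ∫ w, ∫ α, ∫ z, (ℓ - (f (√q * v + √t * w) α + z) ^ 2 / 2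
        + log (heat t (likelihood P f (f (√q * v + √t * w) α + z)) (√q * v)))
        ∂stdG ∂P ∂stdG ∂stdG
      = ∫ v, quadMean P f ℓ (√(q + t) * v) ∂stdG
        + negEntropy stdG (likelihood P f) (likelihood1 P f f1) q t := by
  have hfd := h.densityFamily (P := P)
  have hm : Measurable fun y : ℝ => ℓ - y ^ 2 / 2 := by fun_prop
  have s1 := fun y => hessBound_nonneg (b := b) h.nonneg h.nonneg2 y
  have s2 := fun y => logBound_nonneg h.nonneg y
  have b1 := h.abs_le_weight_sq (K := fun y => ℓ - y ^ 2 / 2)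
    fun y => (hℓ y).trans (by linarith [s2 y])
  have b2 := fun u => h.abs_le_weight_sq fun y => (h.abs_log_heat_le (P := P) t u y).trans
    (by linarith [s1 y])
  have hl := fun u => h.measurable_log_heat (P := P) t u
  have mS : Measurable (quadMean P f ℓ) := h.measurable_integral_mul hm
  have bS : ∀ x, |quadMean P f ℓ x| ≤ _ := h.abs_integral_mul_le b1
  have inner : ∀ u, ∫ w, (quadMean P f ℓ (u + √t * w) + ∫ y, log (heat t (likelihood P f y) u)
      * likelihood P f y (u + √t * w) ∂stdG) ∂stdG = heat t (quadMean P f ℓ) u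
      + density stdG (likelihood P f) (likelihood1 P f f1) (fun M _ => M * log M) t u := by
    intro u
    rw [integral_add (integrable_heat_integrand mS bS t u)
      (integrable_heat_integrand (h.measurable_integral_mul (hl u))
        (h.abs_integral_mul_le (b2 u)) t u)]
    congr 1
    refine (hfd.heat_integral hfd.meas hfd.abs_le (hl u) (b2 u) t u).trans ?_
    rw [density]
    simp_rw [mul_comm]
  simp_rw [h.integral_log_output hℓ, inner]
  rw [← integral_heat hq ht mS bS, negEntropy, energy]
  exact integral_add
    (integrable_of_bounded ((measurable_heat_right mS t).comp (by fun_prop))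
      fun v => abs_heat_le mS bS t _)
    (integrable_of_bounded ((measurable_density hfd integrand_mul_log t).comp (by fun_prop))
      fun v => abs_density_le hfd integrand_mul_log _ _)

end BoundedLink

variable {kA : ℕ} {PA : Measure (Fin kA → ℝ)} {φ φ' φ'' : ℝ → (Fin kA → ℝ) → ℝ} {Δ : ℝ}

lemma Pout_mul_sqrt (hΔ : 0 < Δ) (y x : ℝ) :
    Pout Δ PA φ (√Δ * y) x = (√(2 * π * Δ))⁻¹ *
      (exp (-(y ^ 2 / 2)) * likelihood PA (fun x α => φ x α / √Δ) y x) := by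
  rw [Pout, likelihood, ← integral_const_mul (exp _)]
  congr 1
  refine integral_congr_ae (Eventually.of_forall fun α => ?_)
  simp only [tilt, ← exp_add]
  congr 1
  have hs : √Δ ≠ 0 := (sqrt_pos.2 hΔ).ne'
  have h1 : -(√Δ * y - φ x α) ^ 2 / (2 * √Δ ^ 2)
      = -(y ^ 2 / 2) + (y * (φ x α / √Δ) - (φ x α / √Δ) ^ 2 / 2) := by
    field_simp
    ring
  rwa [sq_sqrt hΔ.le] at h1

lemma log_integral_Pout (hΔ : 0 < Δ) [IsProbabilityMeasure PA] {f1 f2 : ℝ → (Fin kA → ℝ) → ℝ}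
    (h : BoundedLink (fun x α => φ x α / √Δ) f1 f2 a b c) (y t u : ℝ) :
    log (∫ w, Pout Δ PA φ (√Δ * y) (u + √t * w) ∂stdG) = log (√(2 * π * Δ))⁻¹ - y ^ 2 / 2
      + log (heat t (likelihood PA (fun x α => φ x α / √Δ) y) u) := by
  simp_rw [Pout_mul_sqrt hΔ]
  rw [integral_const_mul, integral_const_mul]
  change log (_ * (_ * heat t (likelihood PA (fun x α => φ x α / √Δ) y) u)) = _
  have hpos := h.densityFamily (P := PA).heat_pos t y u
  rw [log_mul (by positivity) (by positivity), log_mul (exp_pos _).ne' hpos.ne', log_exp]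
  ring

lemma IPout_eq (hΔ : 0 < Δ) [IsProbabilityMeasure PA] {f1 f2 : ℝ → (Fin kA → ℝ) → ℝ}
    (h : BoundedLink (fun x α => φ x α / √Δ) f1 f2 a b c) {q ρ : ℝ} (hq : 0 ≤ q) (hqρ : q ≤ ρ) :
    IPout Δ PA φ q ρ
      = negEntropy stdG (likelihood PA fun x α => φ x α / √Δ)
          (likelihood1 PA (fun x α => φ x α / √Δ) f1) ρ 0
        - negEntropy stdG (likelihood PA fun x α => φ x α / √Δ)
          (likelihood1 PA (fun x α => φ x α / √Δ) f1) q (ρ - q) := by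
  obtain ⟨b', h', hℓ⟩ := h.exists_hessBound (log (√(2 * π * Δ))⁻¹)
  have hs : ∀ x α z, φ x α + √Δ * z = √Δ * (φ x α / √Δ + z) := fun x α z => by field_simp
  have e1 := h'.integral_output (P := PA) hℓ (hq.trans hqρ) le_rfl
  have e2 := h'.integral_output (P := PA) hℓ hq (sub_nonneg.2 hqρ)
  simp_rw [← log_integral_Pout hΔ h, ← hs] at e1 e2
  simp only [sqrt_zero, zero_mul, add_zero, integral_const, probReal_univ, one_smul] at e1
  rw [add_sub_cancel] at e2
  rw [IPout, e1, e2]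
  ring

lemma abs_le_supNorm {g : ℝ → (Fin kA → ℝ) → ℝ} (hg : ∃ B, ∀ x α, |g x α| ≤ B) (x : ℝ)
    (α : Fin kA → ℝ) : |g x α| ≤ supNorm g := by
  obtain ⟨B, hB⟩ := hg
  exact le_csSup ⟨B, by rintro _ ⟨p, rfl⟩; exact hB _ _⟩ ⟨(x, α), rfl⟩

lemma supNorm_nonneg (g : ℝ → (Fin kA → ℝ) → ℝ) : 0 ≤ supNorm g :=
  Real.sSup_nonneg (by rintro _ ⟨p, rfl⟩; exact abs_nonneg _)

lemma boundedLink_div_sqrt (Δ : ℝ) (hφmeas : Measurable fun p : ℝ × (Fin kA → ℝ) => φ p.1 p.2)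
    (hφbd : ∃ B, ∀ x a, |φ x a| ≤ B)
    (hd1 : ∀ a x, HasDerivAt (fun u => φ u a) (φ' x a) x)
    (hd2 : ∀ a x, HasDerivAt (fun u => φ' u a) (φ'' x a) x)
    (hφ'bd : ∃ B, ∀ x a, |φ' x a| ≤ B) (hφ''bd : ∃ B, ∀ x a, |φ'' x a| ≤ B) :
    BoundedLink (fun x α => φ x α / √Δ) (fun x α => φ' x α / √Δ) (fun x α => φ'' x α / √Δ)
      (supNorm φ / √Δ) (supNorm φ' / √Δ) (supNorm φ'' / √Δ) := by
  have hle : ∀ {g : ℝ → (Fin kA → ℝ) → ℝ}, (∃ B, ∀ x α, |g x α| ≤ B) → ∀ x α,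
      |g x α / √Δ| ≤ supNorm g / √Δ := fun hg x α => by
    rw [abs_div, abs_of_nonneg (sqrt_nonneg Δ)]
    exact div_le_div_of_nonneg_right (abs_le_supNorm hg x α) (sqrt_nonneg Δ)
  exact
    { meas := hφmeas.div_const _
      abs_le := hle hφbd
      abs1_le := hle hφ'bd
      abs2_le := hle hφ''bd
      deriv1 := fun α x => (hd1 α x).div_const _
      deriv2 := fun α x => (hd2 α x).div_const _
      nonneg := div_nonneg (supNorm_nonneg φ) (sqrt_nonneg Δ)
      nonneg1 := div_nonneg (supNorm_nonneg φ') (sqrt_nonneg Δ)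
      nonneg2 := div_nonneg (supNorm_nonneg φ'') (sqrt_nonneg Δ) }

end Information

/-- Lemma 5 of the paper: regularity and Lipschitz properties of
q ↦ I_{P_out}(q, ρ) and ρ ↦ I_{P_out}(q, ρ). -/
theorem IPout_properties
    (Δ : ℝ) (hΔ : 0 < Δ)
    (kA : ℕ) (PA : Measure (Fin kA → ℝ)) [IsProbabilityMeasure PA]
    (φ φ' φ'' : ℝ → (Fin kA → ℝ) → ℝ)
    -- (H2)
    (hφmeas : Measurable fun p : ℝ × (Fin kA → ℝ) => φ p.1 p.2)
    (hφbd : ∃ B, ∀ x a, |φ x a| ≤ B)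
    (hd1 : ∀ a x, HasDerivAt (fun u => φ u a) (φ' x a) x)
    (hd2 : ∀ a x, HasDerivAt (fun u => φ' u a) (φ'' x a) x)
    (hφ'bd : ∃ B, ∀ x a, |φ' x a| ≤ B)
    (hφ''bd : ∃ B, ∀ x a, |φ'' x a| ≤ B) :
    -- (i)
    (∀ ρ' : ℝ, 0 < ρ' →
      ContDiffOn ℝ 2 (fun q => IPout Δ PA φ q ρ') (Set.Icc 0 ρ') ∧
      ConcaveOn ℝ (Set.Icc 0 ρ') (fun q => IPout Δ PA φ q ρ') ∧
      AntitoneOn (fun q => IPout Δ PA φ q ρ') (Set.Icc 0 ρ')) ∧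
    -- (ii)
    (∀ ρ' : ℝ, 0 < ρ' →
      LipschitzOnWith
        (Real.toNNReal ((4 * (supNorm φ / Real.sqrt Δ) ^ 2 + 1) *
          (supNorm φ' / Real.sqrt Δ) ^ 2))
        (fun q => IPout Δ PA φ q ρ') (Set.Icc 0 ρ')) ∧
    -- (iii)
    (∀ q : ℝ, 0 ≤ q →
      LipschitzOnWith
        (Real.toNNReal ((supNorm φ' / Real.sqrt Δ) ^ 2 *
            (128 * (supNorm φ / Real.sqrt Δ) ^ 4 + 12 * (supNorm φ / Real.sqrt Δ) ^ 2 + 27)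
          + (supNorm φ'' / Real.sqrt Δ) *
            (16 * (supNorm φ / Real.sqrt Δ) ^ 3 + 4 * Real.sqrt (2 / π))))
        (fun ρ' => IPout Δ PA φ q ρ') (Set.Ici q)) := by
  have h := boundedLink_div_sqrt Δ hφmeas hφbd hd1 hd2 hφ'bd hφ''bd
  have hfd := h.densityFamily (P := PA)
  have hlb := h.logBounds (P := PA)
  have hI := fun (q ρ : ℝ) (hq : 0 ≤ q) (hqρ : q ≤ ρ) => IPout_eq (PA := PA) hΔ h hq hqρ
  have hab := curvatureConst_le (b := supNorm φ' / √Δ) h.nonneg h.nonneg2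
  have ha := h.nonneg
  have hc := h.nonneg2
  refine ⟨fun ρ' hρ => ⟨?_, ?_, ?_⟩, fun ρ' hρ => ?_, fun q hq => ?_⟩
  · exact (contDiffOn_const.sub (hfd.contDiffOn_negEntropy hρ)).congr fun q hq =>
      hI q ρ' hq.1 hq.2
  · exact ((concaveOn_const _ (convex_Icc 0 ρ')).sub (hfd.convexOn_negEntropy ρ')).congr
      fun q hq => (hI q ρ' hq.1 hq.2).symm
  · intro x hx y hy hxy
    simp only [hI x ρ' hx.1 hx.2, hI y ρ' hy.1 hy.2]
    exact sub_le_sub_left (hfd.monotoneOn_negEntropy ρ' hx hy hxy) _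
  · refine LipschitzOnWith.of_dist_le_mul fun x hx y hy => ?_
    rw [coe_toNNReal _ (by positivity), dist_eq, dist_eq, hI x ρ' hx.1 hx.2, hI y ρ' hy.1 hy.2,
      sub_sub_sub_cancel_left, abs_sub_comm]
    refine (hlb.abs_negEntropy_sub_le hx hy).trans (le_of_eq ?_)
    ring
  · refine LipschitzOnWith.of_dist_le_mul fun x hx y hy => ?_
    rw [coe_toNNReal _ (by positivity)]
    have key : ∀ {x y : ℝ}, q ≤ x → x ≤ y → dist (IPout Δ PA φ q x) (IPout Δ PA φ q y) ≤
        ((supNorm φ' / √Δ) ^ 2 * (128 * (supNorm φ / √Δ) ^ 4 + 12 * (supNorm φ / √Δ) ^ 2 + 27)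
          + (supNorm φ'' / √Δ) * (16 * (supNorm φ / √Δ) ^ 3 + 4 * √(2 / π))) * dist x y := by
      intro x y hx hxy
      rw [dist_comm, dist_comm x, dist_eq, dist_eq, hI q x hq hx, hI q y hq (hx.trans hxy),
        abs_of_nonneg (sub_nonneg.2 hxy)]
      exact (hlb.abs_information_sub_le hq hx hxy).trans
        (mul_le_mul_of_nonneg_right hab (sub_nonneg.2 hxy))
    rcases le_total x y with hxy | hxy
    · exact key hx hxy
    · rw [dist_comm, dist_comm x]
      exact key hy hxy

end GLM
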